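/- arXiv:2110.01838 — 4 statements merged into one kernel-verified Lean document; each statement's English description precedes it below -/
import Mathlib

section
/- For every integer n ≥ 3, the domination number of the flower snark J_n equals n, and the independent domination number of J_n also equals n. -/
/-- Vertices of the flower snark `J_n`: a copy index `i : Fin n` together with
one of the four vertices of the copy: `0 = a`, `1 = b`, `2 = c`, `3 = d`. -/
abbrev FV (n : ℕ) := Fin n × Fin 4

/-- The flower snark `J_n`: in each copy, `a^i` is adjacent to `b^i, c^i, d^i`;
the `b` vertices form an `n`-cycle; the `c` and `d` vertices form a `2n`-cycle
via the paths `c^i c^{i+1}`, `d^i d^{i+1}` (for `1 ≤ i ≤ n-1`) together with the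
twist edges `c^n d^1` and `d^n c^1`. -/
def flowerSnark (n : ℕ) : SimpleGraph (FV n) :=
  SimpleGraph.fromRel (fun v w =>
    (v.1 = w.1 ∧ v.2 = 0 ∧ w.2 ≠ 0) ∨
    (((v.1 : ℕ) + 1) % n = (w.1 : ℕ) ∧ v.2 = 1 ∧ w.2 = 1) ∨
    ((v.1 : ℕ) + 1 = (w.1 : ℕ) ∧ v.2 = 2 ∧ w.2 = 2) ∨
    ((v.1 : ℕ) + 1 = (w.1 : ℕ) ∧ v.2 = 3 ∧ w.2 = 3) ∨
    ((v.1 : ℕ) = n - 1 ∧ (w.1 : ℕ) = 0 ∧ v.2 = 2 ∧ w.2 = 3) ∨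
    ((v.1 : ℕ) = n - 1 ∧ (w.1 : ℕ) = 0 ∧ v.2 = 3 ∧ w.2 = 2))

/-- `S` is a dominating set of `J_n`. -/
def Dominating (n : ℕ) (S : Set (FV n)) : Prop :=
  ∀ v ∉ S, ∃ w ∈ S, (flowerSnark n).Adj v w

/-- `S` is a minimal dominating set of `J_n`. -/
def MinimalDominating (n : ℕ) (S : Set (FV n)) : Prop :=
  Dominating n S ∧ ∀ T : Set (FV n), T ⊂ S → ¬ Dominating n T

/-- `S` is an independent set of `J_n`. -/
def IndependentSet (n : ℕ) (S : Set (FV n)) : Prop :=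
  ∀ v ∈ S, ∀ w ∈ S, ¬ (flowerSnark n).Adj v w

/-- `S` is a 2-dominating set of `J_n`: every vertex outside `S` has at least
two neighbours in `S`. -/
def TwoDominating (n : ℕ) (S : Set (FV n)) : Prop :=
  ∀ v ∉ S, ∃ w₁ ∈ S, ∃ w₂ ∈ S, w₁ ≠ w₂ ∧
    (flowerSnark n).Adj v w₁ ∧ (flowerSnark n).Adj v w₂

/-- `S` is a total dominating set of `J_n`. -/
def TotalDominating (n : ℕ) (S : Set (FV n)) : Prop :=
  ∀ v : FV n, ∃ w ∈ S, (flowerSnark n).Adj v w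

/-- `S` is a connected dominating set of `J_n`. -/
def ConnectedDominating (n : ℕ) (S : Set (FV n)) : Prop :=
  Dominating n S ∧ ((flowerSnark n).induce S).Connected

/-- `S` is a secure dominating set of `J_n`. -/
def SecureDominating (n : ℕ) (S : Set (FV n)) : Prop :=
  Dominating n S ∧ ∀ v ∉ S, ∃ w ∈ S,
    (flowerSnark n).Adj v w ∧ Dominating n (insert v (S \ {w}))

/-- `v` is undefended with respect to `f`: neither `v` nor any of its
neighbours carries a guard. -/
def Undefended (n : ℕ) (f : FV n → ℕ) (v : FV n) : Prop :=
  f v = 0 ∧ ∀ w, (flowerSnark n).Adj v w → f w = 0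

/-- `f` is a weak Roman dominating function on `J_n`: `f` takes values in
`{0,1,2}`, has no undefended vertex, and every vertex `v` with `f v = 0` has a
neighbour `w` with `f w ≥ 1` such that moving one guard from `w` to `v` leaves
no undefended vertex. -/
def WeakRomanDominating (n : ℕ) (f : FV n → ℕ) : Prop :=
  (∀ v, f v ≤ 2) ∧ (∀ v, ¬ Undefended n f v) ∧
  ∀ v, f v = 0 → ∃ w, (flowerSnark n).Adj v w ∧ 1 ≤ f w ∧
    ∀ u, ¬ Undefended n
      (fun x => if x = v then 1 else if x = w then f w - 1 else f x) u

/-- The domination number of `J_n`. -/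
noncomputable def dominationNumber (n : ℕ) : ℕ :=
  sInf {k | ∃ S : Set (FV n), Dominating n S ∧ S.ncard = k}

/-- The independent domination number of `J_n`. -/
noncomputable def indepDominationNumber (n : ℕ) : ℕ :=
  sInf {k | ∃ S : Set (FV n), Dominating n S ∧ IndependentSet n S ∧ S.ncard = k}

/-- The upper domination number of `J_n`: the maximum cardinality of a minimal
dominating set. -/
noncomputable def upperDominationNumber (n : ℕ) : ℕ :=
  sSup {k | ∃ S : Set (FV n), MinimalDominating n S ∧ S.ncard = k}

/-- The 2-domination number of `J_n`. -/
noncomputable def twoDominationNumber (n : ℕ) : ℕ :=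
  sInf {k | ∃ S : Set (FV n), TwoDominating n S ∧ S.ncard = k}

/-- The total domination number of `J_n`. -/
noncomputable def totalDominationNumber (n : ℕ) : ℕ :=
  sInf {k | ∃ S : Set (FV n), TotalDominating n S ∧ S.ncard = k}

/-- The connected domination number of `J_n`. -/
noncomputable def connectedDominationNumber (n : ℕ) : ℕ :=
  sInf {k | ∃ S : Set (FV n), ConnectedDominating n S ∧ S.ncard = k}

/-- The secure domination number of `J_n`. -/
noncomputable def secureDominationNumber (n : ℕ) : ℕ :=
  sInf {k | ∃ S : Set (FV n), SecureDominating n S ∧ S.ncard = k}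

/-- The weak Roman domination number of `J_n`. -/
noncomputable def weakRomanDominationNumber (n : ℕ) : ℕ :=
  sInf {k | ∃ f : FV n → ℕ, WeakRomanDominating n f ∧ ∑ v, f v = k}

/-- The weight of the copy `J^(m mod n)` in a vertex set `S`, i.e. the number
of vertices of `S` among `a, b, c, d` of that copy. -/
noncomputable def copyWeight {n : ℕ} (S : Set (FV n)) (m : ℕ) : ℕ :=
  (S ∩ {v : FV n | (v.1 : ℕ) = m % n}).ncard

/-- The weight of the copy `J^(m mod n)` in a function `f`, i.e.
`f a + f b + f c + f d` over that copy. -/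
def fCopyWeight {n : ℕ} (f : FV n → ℕ) (m : ℕ) : ℕ :=
  ∑ v ∈ Finset.univ.filter (fun v : FV n => (v.1 : ℕ) = m % n), f v

/-!
Every vertex of `J_n` has at most three neighbours, so a vertex dominates at most four vertices,
itself included, and at least `4n / 4 = n` vertices are needed to dominate all `4n` of them.
The hubs `a^1, …, a^n` attain this bound: their closed neighbourhoods are the `n` copies, which
partition the vertex set.
-/

theorem encard_triple_le {α : Type*} (x y z : α) : ({x, y, z} : Set α).encard ≤ 3 := by
  calc ({x, y, z} : Set α).encard ≤ ({z} : Set α).encard + 1 + 1 :=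
        (Set.encard_insert_le _ x).trans <| by gcongr; exact Set.encard_insert_le _ y
    _ = 3 := by rw [Set.encard_singleton]; norm_num

theorem card_le_encard_mul_of_dominating {V : Type*} {G : SimpleGraph V} {S : Set V} {d : ℕ∞}
    (hdeg : ∀ v ∈ S, (G.neighborSet v).encard ≤ d) (hdom : ∀ v ∉ S, ∃ w ∈ S, G.Adj v w) :
    ENat.card V ≤ S.encard * (d + 1) := by
  rcases S.finite_or_infinite with hS | hS
  · have hcover : ⋃ w ∈ hS.toFinset, insert w (G.neighborSet w) = Set.univ := by
      refine Set.eq_univ_of_forall fun v => ?_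
      simp only [hS.mem_toFinset, Set.mem_iUnion, exists_prop]
      by_cases hv : v ∈ S
      · exact ⟨v, hv, Set.mem_insert _ _⟩
      · obtain ⟨w, hw, hvw⟩ := hdom v hv
        exact ⟨w, hw, Set.mem_insert_of_mem _ hvw.symm⟩
    calc ENat.card V = (⋃ w ∈ hS.toFinset, insert w (G.neighborSet w)).encard := by
          rw [hcover, Set.encard_univ]
      _ ≤ ∑ w ∈ hS.toFinset, (insert w (G.neighborSet w)).encard :=
          hS.toFinset.set_encard_biUnion_le _
      _ ≤ hS.toFinset.card • (d + 1) :=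
          Finset.sum_le_card_nsmul _ _ _ fun w hw =>
            (Set.encard_insert_le _ w).trans <| by gcongr; exact hdeg w (hS.mem_toFinset.1 hw)
      _ = S.encard * (d + 1) := by rw [nsmul_eq_mul, hS.encard_eq_coe_toFinset_card]
  · simp [hS.encard_eq]

theorem val_finRotate {n : ℕ} (i : Fin n) : (finRotate n i : ℕ) = (i + 1) % n := by
  cases n with
  | zero => exact i.elim0
  | succ n => rw [finRotate_apply, Fin.val_add, Fin.val_one', Nat.add_mod_mod]

/-- The permutation of the vertices of `J_n` carrying each copy to the next one, with `c` and `d`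
exchanged on passing from copy `n` to copy `1`. The edges of `J_n` that join two copies are the
pairs `v, rimShift n v` with `v` not of type `a`. -/
def rimShift (n : ℕ) : Equiv.Perm (FV n) :=
  (finRotate n).prodShear fun i => if (i : ℕ) + 1 = n then Equiv.swap 2 3 else Equiv.refl _

/-- The set of hubs `a^1, …, a^n` of `J_n`, which turns out to be a minimum dominating set. -/
def hubs (n : ℕ) : Set (FV n) :=
  {v | v.2 = 0}

theorem mem_hubs {n : ℕ} {v : FV n} : v ∈ hubs n ↔ v.2 = 0 :=
  Iff.rfl

theorem flowerSnark_adj_iff_of_mem_hubs {n : ℕ} {v w : FV n} (hv : v ∈ hubs n) :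
    (flowerSnark n).Adj v w ↔ w.1 = v.1 ∧ w ∉ hubs n := by
  have hne (hw : w.2 ≠ 0) : v ≠ w := fun h => hw (h ▸ mem_hubs.1 hv)
  simp only [flowerSnark, SimpleGraph.fromRel_adj, mem_hubs.1 hv, mem_hubs, zero_ne_one,
    Fin.reduceEq, ne_eq, not_true_eq_false, true_and, false_and, and_false, or_false]
  exact ⟨fun h => ⟨h.2.1.symm, h.2.2⟩, fun h => ⟨hne h.2, h.1.symm, h.2⟩⟩

/-- The alternatives on the right are those of `flowerSnark` that do not involve a hub. -/
theorem rimShift_eq_iff {n : ℕ} {v w : FV n} (hv : v ∉ hubs n) :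
    rimShift n v = w ↔
      ((v.1 : ℕ) + 1) % n = w.1 ∧ v.2 = 1 ∧ w.2 = 1 ∨
      (v.1 : ℕ) + 1 = w.1 ∧ v.2 = 2 ∧ w.2 = 2 ∨
      (v.1 : ℕ) + 1 = w.1 ∧ v.2 = 3 ∧ w.2 = 3 ∨
      (v.1 : ℕ) = n - 1 ∧ (w.1 : ℕ) = 0 ∧ v.2 = 2 ∧ w.2 = 3 ∨
      (v.1 : ℕ) = n - 1 ∧ (w.1 : ℕ) = 0 ∧ v.2 = 3 ∧ w.2 = 2 := by
  obtain ⟨i, k⟩ := v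
  obtain ⟨j, l⟩ := w
  have hi := i.isLt
  have hj := j.isLt
  have hk : k ≠ 0 := mem_hubs.not.1 hv
  simp only [rimShift, Equiv.prodShear_apply, Prod.mk.injEq, Fin.ext_iff (n := n), val_finRotate]
  by_cases hlast : (i : ℕ) + 1 = n
  · rw [if_pos hlast, hlast, Nat.mod_self, Equiv.swap_apply_def]
    lia
  · have hlt : (i : ℕ) + 1 < n := by lia
    rw [if_neg hlast, Nat.mod_eq_of_lt hlt, Equiv.refl_apply]
    lia

theorem flowerSnark_adj_iff_of_notMem_hubs {n : ℕ} {v w : FV n} (hv : v ∉ hubs n)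
    (hw : w ∉ hubs n) :
    (flowerSnark n).Adj v w ↔ v ≠ w ∧ (rimShift n v = w ∨ rimShift n w = v) := by
  simp only [flowerSnark, SimpleGraph.fromRel_adj, rimShift_eq_iff hv, rimShift_eq_iff hw,
    mem_hubs.not.1 hv, mem_hubs.not.1 hw, false_and, and_false, false_or]

theorem neighborSet_flowerSnark_subset_of_mem_hubs {n : ℕ} {v : FV n} (hv : v ∈ hubs n) :
    (flowerSnark n).neighborSet v ⊆ {(v.1, 1), (v.1, 2), (v.1, 3)} := by
  rintro ⟨j, l⟩ hvw
  obtain ⟨hj, hl⟩ := (flowerSnark_adj_iff_of_mem_hubs hv).1 hvw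
  have hl0 : l ≠ 0 := mem_hubs.not.1 hl
  simp only [Set.mem_insert_iff, Set.mem_singleton_iff, Prod.mk.injEq] at hj ⊢
  lia

theorem neighborSet_flowerSnark_subset_of_notMem_hubs {n : ℕ} {v : FV n} (hv : v ∉ hubs n) :
    (flowerSnark n).neighborSet v ⊆ {(v.1, 0), rimShift n v, (rimShift n).symm v} := by
  intro w hvw
  by_cases hw : w ∈ hubs n
  · obtain ⟨hcopy, -⟩ := (flowerSnark_adj_iff_of_mem_hubs hw).1 hvw.symm
    exact Or.inl (Prod.ext hcopy.symm (mem_hubs.1 hw))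
  · obtain ⟨-, h | h⟩ := (flowerSnark_adj_iff_of_notMem_hubs hv hw).1 hvw
    · exact Or.inr (Or.inl h.symm)
    · exact Or.inr (Or.inr ((rimShift n).eq_symm_apply.2 h))

theorem encard_neighborSet_flowerSnark_le {n : ℕ} (v : FV n) :
    ((flowerSnark n).neighborSet v).encard ≤ 3 := by
  by_cases hv : v ∈ hubs n
  · exact (Set.encard_le_encard (neighborSet_flowerSnark_subset_of_mem_hubs hv)).trans
      (encard_triple_le _ _ _)
  · exact (Set.encard_le_encard (neighborSet_flowerSnark_subset_of_notMem_hubs hv)).trans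
      (encard_triple_le _ _ _)

theorem Dominating.le_ncard {n : ℕ} {S : Set (FV n)} (hS : Dominating n S) : n ≤ S.ncard := by
  have h := card_le_encard_mul_of_dominating
    (fun v _ => encard_neighborSet_flowerSnark_le v) hS
  rw [ENat.card_eq_coe_natCard, ← S.toFinite.cast_ncard_eq] at h
  have hcard : Nat.card (FV n) ≤ S.ncard * (3 + 1) := mod_cast h
  rw [Nat.card_prod, Nat.card_fin, Nat.card_fin] at hcard
  lia

theorem dominating_hubs (n : ℕ) : Dominating n (hubs n) := by
  intro v hv
  have hhub : ((v.1, 0) : FV n) ∈ hubs n := mem_hubs.2 rfl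
  have hadj : (flowerSnark n).Adj (v.1, 0) v :=
    (flowerSnark_adj_iff_of_mem_hubs hhub).2 ⟨rfl, hv⟩
  exact ⟨_, hhub, hadj.symm⟩

theorem independentSet_hubs (n : ℕ) : IndependentSet n (hubs n) := fun _ hv _ hw h =>
  ((flowerSnark_adj_iff_of_mem_hubs hv).1 h).2 hw

theorem ncard_hubs (n : ℕ) : (hubs n).ncard = n := by
  have hprod : hubs n = Set.univ ×ˢ {0} := by ext; simp [mem_hubs]
  simp [hprod, Set.ncard_prod]

/-- For every `n ≥ 3`, the domination number and the independent domination
number of the flower snark `J_n` both equal `n`. -/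
theorem flowerSnark_domination_and_indepDomination (n : ℕ) (hn : 3 ≤ n) :
    dominationNumber n = n ∧ indepDominationNumber n = n := by
  constructor
  · exact IsLeast.csInf_eq ⟨⟨hubs n, dominating_hubs n, ncard_hubs n⟩,
      fun _ ⟨_, hS, hcard⟩ => hcard ▸ hS.le_ncard⟩
  · exact IsLeast.csInf_eq ⟨⟨hubs n, dominating_hubs n, independentSet_hubs n, ncard_hubs n⟩,
      fun _ ⟨_, hS, _, hcard⟩ => hcard ▸ hS.le_ncard⟩
end

section
/- For every integer n ≥ 3, the upper domination number of the flower snark J_n equals 2n if n is even, and equals 2n − 1 if n is odd. -/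
/-!
Let `S` be a minimal dominating set of a connected regular graph. Every vertex of `S` with a
neighbour in `S` has an external private neighbour; choose one for each of them. The remaining
vertices of `S` form a set `I` whose neighbours all lie in the set `U` of the unchosen vertices
outside `S`, so `#I ≤ #U` by regularity and hence `#S ≤ #Sᶜ`.

In case of equality, counting edges shows that `I ∪ U` is closed under adjacency, hence empty or
everything. So either the edges between `S` and `Sᶜ` form a perfect matching, or `S` is one side of
a bipartition. In `J_n` both force `n` to be even: in the second case membership in `S` alternates
along the cycle of the vertices `b`, in the first case along the centres `a`, which follows by
counting the neighbours in `S` of the three leaves of a copy. Conversely, the centres of every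
other copy together with the leaves of the remaining copies form an independent dominating set of
size `2n` or `2n - 1`.
-/

open Finset

section Domination

variable {V : Type*} {G : SimpleGraph V}

/-- `S` is a dominating set of the graph `G`. -/
def IsDominating (G : SimpleGraph V) (S : Set V) : Prop :=
  ∀ v ∉ S, ∃ w ∈ S, G.Adj v w

/-- `u` is an external private neighbour of `s ∈ S`: it lies outside `S` and `s` is its only
neighbour in `S`. -/
def IsPrivateNeighbor (G : SimpleGraph V) (S : Set V) (s u : V) : Prop :=
  u ∉ S ∧ ∀ w ∈ S, G.Adj u w ↔ w = s

/-- The edges between `S` and its complement form a perfect matching of `G`: each vertex has exactly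
one neighbour on the other side. -/
def IsPerfectMatchingCut (G : SimpleGraph V) (S : Set V) : Prop :=
  ∀ v, ∃! w, G.Adj v w ∧ (w ∈ S ↔ v ∉ S)

theorem IsDominating.minimal_of_isIndepSet {S : Set V} (hS : IsDominating G S)
    (hI : G.IsIndepSet S) : Minimal (IsDominating G) S := by
  refine Set.minimal_iff_forall_ssubset.2 ⟨hS, fun T hT hTdom => ?_⟩
  obtain ⟨v, hv, hvT⟩ := Set.exists_of_ssubset hT
  obtain ⟨w, hw, hvw⟩ := hTdom v hvT
  exact hI hv (hT.subset hw) hvw.ne hvw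

theorem exists_isPrivateNeighbor_of_minimal {S : Set V} (hS : Minimal (IsDominating G) S) {s t : V}
    (hs : s ∈ S) (ht : t ∈ S) (hst : G.Adj s t) : ∃ u, IsPrivateNeighbor G S s u := by
  have hnot : ¬ IsDominating G (S \ {s}) :=
    (Set.minimal_iff_forall_ssubset.1 hS).2 (Set.sdiff_singleton_ssubset.2 hs)
  simp only [IsDominating, not_forall, not_exists, not_and] at hnot
  obtain ⟨u, hu, hu'⟩ := hnot
  have honly : ∀ w ∈ S, G.Adj u w → w = s := fun w hw huw =>
    by_contra fun hne => hu' w ⟨hw, hne⟩ huw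
  have huS : u ∉ S := fun huS => by
    obtain rfl : u = s := by_contra fun hne => hu ⟨huS, hne⟩
    exact hst.ne (honly t ht hst).symm
  obtain ⟨w, hw, huw⟩ := hS.prop u huS
  obtain rfl := honly w hw huw
  exact ⟨u, huS, fun v hv => ⟨honly v hv, by rintro rfl; exact huw⟩⟩

theorem eq_empty_or_eq_univ_of_adj_closed (hG : G.Preconnected) {K : Set V}
    (hK : ∀ v ∈ K, ∀ w, G.Adj v w → w ∈ K) : K = ∅ ∨ K = Set.univ := by
  refine or_iff_not_imp_left.2 fun hne => Set.eq_univ_of_forall fun v => ?_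
  obtain ⟨u, hu⟩ := Set.nonempty_iff_ne_empty.2 hne
  by_contra hv
  obtain ⟨d, -, hd, hd'⟩ := (hG u v).some.exists_boundary_dart K hu hv
  exact hd' (hK _ hd _ d.adj)

end Domination

theorem IsPerfectMatchingCut.card_filter_mem {V : Type*} [DecidableEq V] {G : SimpleGraph V}
    [G.LocallyFinite] {S : Finset V} (hS : IsPerfectMatchingCut G (S : Set V)) (v : V) :
    #{w ∈ G.neighborFinset v | w ∈ S} = if v ∈ S then G.degree v - 1 else 1 := by
  have hone : #{w ∈ G.neighborFinset v | w ∈ S ↔ v ∉ S} = 1 := by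
    obtain ⟨w, hw, huniq⟩ := hS v
    exact card_eq_one.2 ⟨w, ext fun u => by
      simpa using ⟨huniq u, by rintro rfl; exact hw⟩⟩
  split_ifs with hv
  · have hsplit := card_filter_add_card_filter_not (s := G.neighborFinset v) (· ∈ S)
    simp only [hv, not_true_eq_false, iff_false] at hone
    rw [hone, G.card_neighborFinset_eq_degree] at hsplit
    omega
  · simpa [hv] using hone

section Regular

variable {V : Type*} {G : SimpleGraph V} [G.LocallyFinite] {r : ℕ} {A B : Finset V}

theorem filter_adj_subset_neighborFinset [DecidableRel G.Adj] (A : Finset V) (v : V) :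
    {w ∈ A | G.Adj v w} ⊆ G.neighborFinset v := fun w hw => by
  simpa using (mem_filter.1 hw).2

theorem card_filter_adj_le [DecidableRel G.Adj] (hG : G.IsRegularOfDegree r) (A : Finset V)
    (v : V) : #{w ∈ A | G.Adj v w} ≤ r :=
  (card_le_card (filter_adj_subset_neighborFinset A v)).trans_eq (hG v)

theorem sum_card_filter_adj [DecidableRel G.Adj] (hG : G.IsRegularOfDegree r)
    (hAB : ∀ a ∈ A, ∀ w, G.Adj a w → w ∈ B) :
    ∑ b ∈ B, #{a ∈ A | G.Adj b a} = #A * r := by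
  have hN : ∀ a ∈ A, {b ∈ B | G.Adj b a} = G.neighborFinset a := fun a ha => by
    ext w
    simpa [G.adj_comm w a] using hAB a ha w
  calc ∑ b ∈ B, #{a ∈ A | G.Adj b a}
      = ∑ a ∈ A, #{b ∈ B | G.Adj b a} := sum_card_bipartiteAbove_eq_sum_card_bipartiteBelow G.Adj
    _ = #A * r := sum_const_nat fun a ha => by
      rw [hN a ha, G.card_neighborFinset_eq_degree, hG.degree_eq]

theorem card_le_card_of_forall_adj_mem (hG : G.IsRegularOfDegree r) (hr : 0 < r)
    (hAB : ∀ a ∈ A, ∀ w, G.Adj a w → w ∈ B) : #A ≤ #B := by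
  classical
  refine Nat.le_of_mul_le_mul_right ?_ hr
  calc #A * r = ∑ b ∈ B, #{a ∈ A | G.Adj b a} := (sum_card_filter_adj hG hAB).symm
    _ ≤ #B * r := sum_le_card_nsmul B _ r fun b _ => card_filter_adj_le hG A b

theorem mem_of_adj_of_card_le (hG : G.IsRegularOfDegree r)
    (hAB : ∀ a ∈ A, ∀ w, G.Adj a w → w ∈ B) (hcard : #B ≤ #A) {b w : V} (hb : b ∈ B)
    (hbw : G.Adj b w) : w ∈ A := by
  classical
  have hle : ∀ b ∈ B, #{a ∈ A | G.Adj b a} ≤ r := fun b _ => card_filter_adj_le hG A b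
  have hsum : ∑ b ∈ B, #{a ∈ A | G.Adj b a} = ∑ _b ∈ B, r := by
    refine (sum_le_sum hle).antisymm ?_
    rw [sum_card_filter_adj hG hAB, sum_const, smul_eq_mul]
    exact Nat.mul_le_mul_right r hcard
  have heq : {a ∈ A | G.Adj b a} = G.neighborFinset b :=
    eq_of_subset_of_card_le (filter_adj_subset_neighborFinset A b)
      ((hG b).trans ((sum_eq_sum_iff_of_le hle).1 hsum b hb).symm).le
  exact (mem_filter.1 (heq ▸ (G.mem_neighborFinset b w).2 hbw)).1

end Regular

section MinimalDominatingSet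

variable {V : Type*} {G : SimpleGraph V} [DecidableRel G.Adj] {S : Finset V}

/-- The vertices of `S` without a neighbour in `S`: the set `I` of the header. -/
def isolatedPart (G : SimpleGraph V) [DecidableRel G.Adj] (S : Finset V) : Finset V :=
  {s ∈ S | ∀ t ∈ S, ¬ G.Adj s t}

theorem isolatedPart_subset : isolatedPart G S ⊆ S :=
  filter_subset _ _

theorem not_adj_of_mem_isolatedPart {s t : V} (hs : s ∈ isolatedPart G S) (ht : t ∈ S) :
    ¬ G.Adj s t :=
  (mem_filter.1 hs).2 t ht

variable [DecidableEq V] {e : V → V}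

/-- `e` assigns to each vertex of `S` that has a neighbour in `S` an external private neighbour. -/
def IsPrivateNeighborChoice (G : SimpleGraph V) [DecidableRel G.Adj] (S : Finset V) (e : V → V) :
    Prop :=
  ∀ s ∈ S \ isolatedPart G S, IsPrivateNeighbor G S s (e s)

/-- The vertices outside `S` that are not among the private neighbours chosen by `e`: the set `U` of
the header. -/
def unchosenPart [Fintype V] (G : SimpleGraph V) [DecidableRel G.Adj] (S : Finset V) (e : V → V) :
    Finset V :=
  Sᶜ \ (S \ isolatedPart G S).image e

theorem exists_isPrivateNeighborChoice (hS : Minimal (IsDominating G) (S : Set V)) :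
    ∃ e, IsPrivateNeighborChoice G S e := by
  have h : ∀ s ∈ S \ isolatedPart G S, ∃ u, IsPrivateNeighbor G S s u := fun s hs => by
    simp only [isolatedPart, mem_sdiff, mem_filter, not_and, not_forall, not_not] at hs
    obtain ⟨t, ht, hst⟩ := hs.2 hs.1
    exact exists_isPrivateNeighbor_of_minimal hS hs.1 ht hst
  choose! e he using h
  exact ⟨e, he⟩

namespace IsPrivateNeighborChoice

theorem eq_of_adj (he : IsPrivateNeighborChoice G S e) {s t : V} (hs : s ∈ S)
    (ht : t ∈ S \ isolatedPart G S) (h : G.Adj (e t) s) : s = t :=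
  ((he t ht).2 s hs).1 h

theorem adj (he : IsPrivateNeighborChoice G S e) {s : V} (hs : s ∈ S \ isolatedPart G S) :
    G.Adj (e s) s :=
  ((he s hs).2 s (mem_sdiff.1 hs).1).2 rfl

theorem injOn (he : IsPrivateNeighborChoice G S e) :
    Set.InjOn e (S \ isolatedPart G S : Finset V) := fun _ hs _ ht hst =>
  he.eq_of_adj (mem_sdiff.1 hs).1 ht (hst ▸ he.adj hs)

variable [Fintype V]

theorem card_unchosenPart_add (he : IsPrivateNeighborChoice G S e) :
    #(unchosenPart G S e) + #(S \ isolatedPart G S) = #Sᶜ := by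
  have hsub : (S \ isolatedPart G S).image e ⊆ Sᶜ :=
    image_subset_iff.2 fun s hs => mem_compl.2 (he s hs).1
  rw [← card_image_of_injOn he.injOn, unchosenPart, card_sdiff_add_card_eq_card hsub]

theorem mem_unchosenPart_of_adj (he : IsPrivateNeighborChoice G S e) {s w : V}
    (hs : s ∈ isolatedPart G S) (hsw : G.Adj s w) : w ∈ unchosenPart G S e := by
  refine mem_sdiff.2 ⟨mem_compl.2 fun hw => not_adj_of_mem_isolatedPart hs hw hsw, fun hw => ?_⟩
  obtain ⟨t, ht, rfl⟩ := mem_image.1 hw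
  exact (mem_sdiff.1 ht).2 (he.eq_of_adj (isolatedPart_subset hs) ht hsw.symm ▸ hs)

theorem card_isolatedPart_le (he : IsPrivateNeighborChoice G S e) {r : ℕ}
    (hG : G.IsRegularOfDegree r) (hr : 0 < r) : #(isolatedPart G S) ≤ #(unchosenPart G S e) :=
  card_le_card_of_forall_adj_mem hG hr fun _ hs _ => he.mem_unchosenPart_of_adj hs

theorem isBipartiteWith (he : IsPrivateNeighborChoice G S e)
    (hK : ∀ v, v ∈ isolatedPart G S ∪ unchosenPart G S e)
    (hclosed : ∀ u ∈ unchosenPart G S e, ∀ w, G.Adj u w → w ∈ isolatedPart G S) :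
    G.IsBipartiteWith S (Sᶜ : Finset V) := by
  refine ⟨disjoint_coe.2 disjoint_compl_right, fun v w hvw => ?_⟩
  rcases mem_union.1 (hK v) with hv | hv
  · exact .inl ⟨isolatedPart_subset hv, sdiff_subset (he.mem_unchosenPart_of_adj hv hvw)⟩
  · exact .inr ⟨sdiff_subset hv, isolatedPart_subset (hclosed v hv w hvw)⟩

theorem isPerfectMatchingCut (he : IsPrivateNeighborChoice G S e)
    (hI : isolatedPart G S = ∅) (hU : unchosenPart G S e = ∅) :
    IsPerfectMatchingCut G (S : Set V) := by
  have hmem : ∀ {s}, s ∈ S → s ∈ S \ isolatedPart G S := fun hs => by simpa [hI] using hs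
  have hsurj : ∀ u ∉ S, ∃ s ∈ S, e s = u := fun u hu => by
    have := sdiff_eq_empty_iff_subset.1 hU (mem_compl.2 hu)
    simpa [hI] using this
  intro v
  by_cases hv : v ∈ S
  · refine ⟨e v, ⟨(he.adj (hmem hv)).symm, by simpa [hv] using (he v (hmem hv)).1⟩, ?_⟩
    rintro w ⟨hvw, hw⟩
    obtain ⟨t, ht, rfl⟩ := hsurj w (by simpa [hv] using hw)
    rw [he.eq_of_adj hv (hmem ht) hvw.symm]
  · obtain ⟨s, hs, rfl⟩ := hsurj v hv
    refine ⟨s, ⟨he.adj (hmem hs), by simp [hs, hv]⟩, ?_⟩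
    rintro w ⟨hvw, hw⟩
    exact he.eq_of_adj (by simpa [hv] using hw) (hmem hs) hvw

end IsPrivateNeighborChoice

variable [Fintype V] {r : ℕ}

theorem card_le_card_compl_of_minimal (hG : G.IsRegularOfDegree r) (hr : 0 < r)
    (hS : Minimal (IsDominating G) (S : Set V)) : #S ≤ #Sᶜ := by
  obtain ⟨e, he⟩ := exists_isPrivateNeighborChoice hS
  rw [← he.card_unchosenPart_add, ← card_sdiff_add_card_eq_card (isolatedPart_subset (G := G)),
    add_comm]
  exact Nat.add_le_add_right (he.card_isolatedPart_le hG hr) _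

theorem isBipartiteWith_or_isPerfectMatchingCut_of_minimal (hconn : G.Preconnected)
    (hG : G.IsRegularOfDegree r) (hS : Minimal (IsDominating G) (S : Set V))
    (hcard : #Sᶜ ≤ #S) :
    G.IsBipartiteWith S (Sᶜ : Finset V) ∨ IsPerfectMatchingCut G (S : Set V) := by
  obtain ⟨e, he⟩ := exists_isPrivateNeighborChoice hS
  have hle : #(unchosenPart G S e) ≤ #(isolatedPart G S) := by
    have := he.card_unchosenPart_add
    have := card_sdiff_add_card_eq_card (isolatedPart_subset (G := G) (S := S))
    omega
  have hclosed : ∀ u ∈ unchosenPart G S e, ∀ w, G.Adj u w → w ∈ isolatedPart G S :=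
    fun u hu w => mem_of_adj_of_card_le hG (fun _ hs _ => he.mem_unchosenPart_of_adj hs) hle hu
  have hK : ∀ v ∈ (isolatedPart G S ∪ unchosenPart G S e : Set V), ∀ w, G.Adj v w →
      w ∈ (isolatedPart G S ∪ unchosenPart G S e : Set V) := by
    rintro v (hv | hv) w hvw
    · exact .inr (he.mem_unchosenPart_of_adj hv hvw)
    · exact .inl (hclosed v hv w hvw)
  rcases eq_empty_or_eq_univ_of_adj_closed hconn hK with h | h
  · simp only [Set.union_empty_iff, coe_eq_empty] at h
    exact .inr (he.isPerfectMatchingCut h.1 h.2)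
  · refine .inl (he.isBipartiteWith (fun v => ?_) hclosed)
    simpa using h.ge (Set.mem_univ v)

end MinimalDominatingSet

section FlowerSnark

theorem even_card_of_perm_iff_not {α : Type*} [Fintype α] (σ : Equiv.Perm α) (p : α → Prop)
    (h : ∀ a, p (σ a) ↔ ¬ p a) : Even (Fintype.card α) := by
  classical
  have hcard : #{a | p a} = #{a | ¬ p a} := by
    simp only [← h]
    exact (card_equiv σ fun a => by simp).symm
  exact ⟨#{a | p a}, by rw [← card_univ, ← card_filter_add_card_filter_not p, ← hcard]⟩

variable {n : ℕ}

theorem minimalDominating_iff {S : Set (FV n)} :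
    MinimalDominating n S ↔ Minimal (IsDominating (flowerSnark n)) S :=
  Set.minimal_iff_forall_ssubset.symm

noncomputable instance : DecidableRel (flowerSnark n).Adj :=
  Classical.decRel _

namespace flowerSnark

/-- The relabelling of the vertices of a copy along the edges from copy `i` to the next one: it
exchanges `c` and `d` after the last copy. -/
def twist (i : Fin n) : Equiv.Perm (Fin 4) :=
  if (i : ℕ) + 1 = n then Equiv.swap 2 3 else 1

theorem twist_zero (i : Fin n) : twist i 0 = 0 := by
  unfold twist
  split_ifs <;> decide

theorem adj_center_iff {i : Fin n} {w : FV n} :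
    (flowerSnark n).Adj (i, 0) w ↔ w.1 = i ∧ w.2 ≠ 0 := by
  obtain ⟨j, l⟩ := w
  fin_cases l <;> simp [flowerSnark, eq_comm]

theorem center_adj_leaf (i : Fin n) {k : Fin 4} (hk : k ≠ 0) :
    (flowerSnark n).Adj (i, 0) (i, k) :=
  adj_center_iff.2 ⟨rfl, hk⟩

/-- The sum of `f` over the leaves `b`, `c`, `d` of copy `i`. -/
def leafSum (f : FV n → ℕ) (i : Fin n) : ℕ :=
  f (i, 1) + f (i, 2) + f (i, 3)

theorem leafSum_comp_twist (f : FV n → ℕ) (i j : Fin n) :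
    f (i, twist j 1) + f (i, twist j 2) + f (i, twist j 3) = leafSum f i := by
  unfold twist leafSum
  split_ifs <;> simp [Equiv.swap_apply_def, add_right_comm]

theorem sum_neighborFinset_center (f : FV n → ℕ) (i : Fin n) :
    ∑ w ∈ (flowerSnark n).neighborFinset (i, 0), f w = leafSum f i := by
  have h : (flowerSnark n).neighborFinset (i, 0) = {(i, 1), (i, 2), (i, 3)} := by
    ext ⟨j, l⟩
    rw [SimpleGraph.mem_neighborFinset, adj_center_iff]
    fin_cases l <;> simp
  rw [h, sum_insert (by simp), sum_pair (by simp), leafSum, add_assoc]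

theorem val_add_one_mod (i : Fin n) :
    ((i : ℕ) + 1) % n = if (i : ℕ) + 1 = n then 0 else (i : ℕ) + 1 := by
  split_ifs with h
  · rw [h, Nat.mod_self]
  · exact Nat.mod_eq_of_lt (by omega)

section Rotation

variable [NeZero n]

/-- The map that moves each copy to the next one along the edges between their leaves. It is an
automorphism of `J_n`, of order `2n` because of the twist; using it avoids treating the edges at the
last copy separately. -/
def rotation (n : ℕ) [NeZero n] : Equiv.Perm (FV n) :=
  Equiv.prodShear (Equiv.addRight 1) twist

theorem rotation_apply (i : Fin n) (k : Fin 4) : rotation n (i, k) = (i + 1, twist i k) :=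
  rfl

theorem val_add_one (i : Fin n) : ((i + 1 : Fin n) : ℕ) = ((i : ℕ) + 1) % n := by
  rw [Fin.val_add, Fin.val_one', Nat.add_mod_mod]

theorem adj_leaf_iff (hn : 2 ≤ n) {i : Fin n} {k : Fin 4} (hk : k ≠ 0) {w : FV n} :
    (flowerSnark n).Adj (i, k) w ↔
      w = (i, 0) ∨ w = rotation n (i, k) ∨ w = (rotation n).symm (i, k) := by
  obtain ⟨j, l⟩ := w
  have hi := i.isLt
  have hj := j.isLt
  simp only [Equiv.eq_symm_apply, flowerSnark, SimpleGraph.fromRel_adj, ne_eq, rotation_apply,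
    twist, Prod.mk.injEq, Fin.ext_iff (n := n), val_add_one, val_add_one_mod]
  by_cases hi' : (i : ℕ) + 1 = n <;> by_cases hj' : (j : ℕ) + 1 = n <;>
    simp only [hi', hj', if_true, if_false] <;>
    fin_cases k <;> fin_cases l <;>
    simp only [Fin.isValue, Fin.zero_eta, Fin.mk_one, Fin.reduceFinMk, Fin.reduceEq, zero_ne_one,
      one_ne_zero, ne_eq, not_true_eq_false, not_false_eq_true, Equiv.Perm.coe_one, id_eq,
      Equiv.swap_apply_def, ↓reduceIte, and_false, and_true, and_self, true_and, false_or, or_false,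
      or_self, iff_false, not_and, not_or] at hk ⊢ <;> omega

theorem rotation_ne_rotation_symm (hn : 3 ≤ n) (v : FV n) :
    rotation n v ≠ (rotation n).symm v := fun h => by
  rw [Equiv.eq_symm_apply] at h
  have hval : ((v.1 + 1 + 1 : Fin n) : ℕ) = v.1 := congrArg (fun w : FV n => (w.1 : ℕ)) h
  rw [val_add_one, val_add_one_mod, val_add_one, val_add_one_mod] at hval
  split_ifs at hval <;> omega

theorem rotation_ne_center {k : Fin 4} (hk : k ≠ 0) (i j : Fin n) :
    rotation n (i, k) ≠ (j, 0) := fun h =>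
  hk ((twist i).injective ((congrArg Prod.snd h).trans (twist_zero i).symm))

theorem rotation_symm_ne_center {k : Fin 4} (hk : k ≠ 0) (i j : Fin n) :
    (rotation n).symm (i, k) ≠ (j, 0) := fun h => by
  rw [Equiv.symm_apply_eq, rotation_apply, twist_zero] at h
  exact hk (congrArg Prod.snd h)

theorem leafSum_comp_rotation (f : FV n → ℕ) (i : Fin n) :
    leafSum (f ∘ rotation n) i = leafSum f (i + 1) :=
  leafSum_comp_twist f (i + 1) i

theorem leafSum_comp_rotation_symm (f : FV n → ℕ) (i : Fin n) :
    leafSum (f ∘ (rotation n).symm) i = leafSum f (i - 1) := by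
  have h := leafSum_comp_rotation (f ∘ (rotation n).symm) (i - 1)
  rwa [Function.comp_assoc, Equiv.symm_comp_self, Function.comp_id, sub_add_cancel, eq_comm] at h

theorem sum_neighborFinset_leaf (hn : 3 ≤ n) (f : FV n → ℕ) (i : Fin n) {k : Fin 4} (hk : k ≠ 0) :
    ∑ w ∈ (flowerSnark n).neighborFinset (i, k), f w =
      f (i, 0) + f (rotation n (i, k)) + f ((rotation n).symm (i, k)) := by
  have h : (flowerSnark n).neighborFinset (i, k) =
      {(i, 0), rotation n (i, k), (rotation n).symm (i, k)} := by
    ext w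
    simp [adj_leaf_iff (by omega : 2 ≤ n) hk]
  rw [h, sum_insert, sum_pair (rotation_ne_rotation_symm hn _), add_assoc]
  simp [(rotation_ne_center hk i i).symm, (rotation_symm_ne_center hk i i).symm]

/-- The twist permutes the leaves of a copy, so it cannot be seen in sums over all three of them. -/
theorem leafSum_sum_neighborFinset (hn : 3 ≤ n) (f : FV n → ℕ) (i : Fin n) :
    leafSum (fun v => ∑ w ∈ (flowerSnark n).neighborFinset v, f w) i =
      3 * f (i, 0) + leafSum f (i + 1) + leafSum f (i - 1) := by
  rw [← leafSum_comp_rotation, ← leafSum_comp_rotation_symm]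
  simp only [leafSum, Function.comp_apply, sum_neighborFinset_leaf hn f i, ne_eq, one_ne_zero,
    not_false_eq_true, Fin.reduceEq]
  ring

theorem leaf_one_adj_succ (hn : 2 ≤ n) (i : Fin n) : (flowerSnark n).Adj (i, 1) (i + 1, 1) := by
  have h : rotation n (i, 1) = (i + 1, 1) := by
    rw [rotation_apply, twist]
    split_ifs <;> rfl
  exact (adj_leaf_iff hn one_ne_zero).2 (.inr (.inl h.symm))

theorem center_add_center_of_sum_neighborFinset_eq (hn : 3 ≤ n) {f : FV n → ℕ}
    (hf : ∀ v, ∑ w ∈ (flowerSnark n).neighborFinset v, f w = 1 + f v) (i : Fin n) :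
    f (i + 1, 0) + f (i - 1, 0) + 2 * f (i, 0) = 2 := by
  have hleaf : ∀ j, leafSum f j = 1 + f (j, 0) := fun j => by
    rw [← hf, sum_neighborFinset_center]
  have hsum : leafSum (fun v => 1 + f v) i =
      3 * f (i, 0) + leafSum f (i + 1) + leafSum f (i - 1) := by
    simpa only [hf] using leafSum_sum_neighborFinset hn f i
  have hsplit : leafSum (fun v => 1 + f v) i = 3 + leafSum f i := by
    unfold leafSum
    ring
  rw [hsplit, hleaf, hleaf, hleaf] at hsum
  omega

end Rotation

theorem isRegularOfDegree_three (hn : 3 ≤ n) : (flowerSnark n).IsRegularOfDegree 3 := by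
  have : NeZero n := ⟨by omega⟩
  rintro ⟨i, k⟩
  rw [← SimpleGraph.card_neighborFinset_eq_degree, card_eq_sum_ones]
  rcases eq_or_ne k 0 with rfl | hk
  · exact sum_neighborFinset_center _ i
  · exact sum_neighborFinset_leaf hn _ i hk

theorem preconnected (hn : 2 ≤ n) : (flowerSnark n).Preconnected := by
  have : NeZero n := ⟨by omega⟩
  have hcopy : ∀ i k, (flowerSnark n).Reachable (i, 0) (i, k) := fun i k => by
    rcases eq_or_ne k 0 with rfl | hk
    · exact .rfl
    · exact (center_adj_leaf i hk).reachable
  have hcenter : ∀ m (hm : m < n), (flowerSnark n).Reachable (0, 0) (⟨m, hm⟩, 0) := by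
    intro m
    induction m with
    | zero => exact fun _ => .rfl
    | succ m ih =>
      intro hm
      have hsucc : (⟨m + 1, hm⟩ : Fin n) = ⟨m, by omega⟩ + 1 := by
        rw [Fin.ext_iff, val_add_one, Nat.mod_eq_of_lt hm]
      rw [hsucc]
      exact (ih _).trans <| (hcopy _ 1).trans <| (leaf_one_adj_succ hn _).reachable.trans
        (hcopy _ 1).symm
  have hall : ∀ v : FV n, (flowerSnark n).Reachable (0, 0) v := fun v =>
    (hcenter v.1 v.1.isLt).trans (hcopy v.1 v.2)
  exact fun v w => (hall v).symm.trans (hall w)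

theorem even_of_isPerfectMatchingCut (hn : 3 ≤ n) {S : Finset (FV n)}
    (hS : IsPerfectMatchingCut (flowerSnark n) (S : Set (FV n))) : Even n := by
  have : NeZero n := ⟨by omega⟩
  have hf : ∀ v, ∑ w ∈ (flowerSnark n).neighborFinset v, (if w ∈ S then 1 else 0) =
      1 + if v ∈ S then 1 else 0 := fun v => by
    rw [← card_filter, hS.card_filter_mem, (isRegularOfDegree_three hn).degree_eq]
    split_ifs <;> rfl
  have hflip : ∀ i : Fin n, (i + 1, 0) ∈ S ↔ (i, 0) ∉ S := fun i => by
    have h := center_add_center_of_sum_neighborFinset_eq hn hf i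
    by_cases hi : (i, 0) ∈ S <;> by_cases hi' : (i + 1, 0) ∈ S <;> grind
  simpa using even_card_of_perm_iff_not (Equiv.addRight (1 : Fin n)) (fun i => (i, 0) ∈ S) hflip

theorem even_of_isBipartiteWith (hn : 2 ≤ n) {S : Finset (FV n)}
    (hS : (flowerSnark n).IsBipartiteWith S (Sᶜ : Finset (FV n))) : Even n := by
  have : NeZero n := ⟨by omega⟩
  have hflip : ∀ i : Fin n, (i + 1, 1) ∈ S ↔ (i, 1) ∉ S := fun i => by
    have h := hS.mem_of_adj (leaf_one_adj_succ hn i)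
    simp only [coe_compl, mem_coe, Set.mem_compl_iff] at h
    tauto
  simpa using even_card_of_perm_iff_not (Equiv.addRight (1 : Fin n)) (fun i => (i, 1) ∈ S) hflip

theorem card_le_of_minimal (hn : 3 ≤ n) {S : Finset (FV n)}
    (hS : Minimal (IsDominating (flowerSnark n)) (S : Set (FV n))) : #S ≤ 2 * n - n % 2 := by
  have hreg := isRegularOfDegree_three hn
  have hle : #S ≤ #Sᶜ := card_le_card_compl_of_minimal hreg three_pos hS
  have hadd : #S + #Sᶜ = n * 4 := by simp [card_add_card_compl]
  rcases Nat.even_or_odd n with hn' | hn'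
  · rw [Nat.even_iff.1 hn']
    omega
  · rw [Nat.odd_iff.1 hn']
    by_contra! hlt
    refine Nat.not_even_iff_odd.2 hn' ?_
    rcases isBipartiteWith_or_isPerfectMatchingCut_of_minimal (preconnected (by omega)) hreg hS
      (by omega) with h | h
    · exact even_of_isBipartiteWith (by omega) h
    · exact even_of_isPerfectMatchingCut hn h

/-- The minimal dominating set of maximum size: the centres of the copies with even index and the
leaves of the copies with odd index (counted from `0`). -/
def alternatingSet (n : ℕ) : Finset (FV n) :=
  {v | Even (v.1 : ℕ) ↔ v.2 = 0}

theorem mem_alternatingSet {v : FV n} : v ∈ alternatingSet n ↔ (Even (v.1 : ℕ) ↔ v.2 = 0) := by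
  simp [alternatingSet]

theorem card_alternatingSet (n : ℕ) : #(alternatingSet n) = 2 * n - n % 2 := by
  have hcopy : ∀ i : Fin n,
      #{k : Fin 4 | Even (i : ℕ) ↔ k = 0} = if Even (i : ℕ) then 1 else 3 := fun i => by
    split_ifs with h <;> simp only [h, true_iff, false_iff] <;> rfl
  have hsum : ∀ m, ∑ i ∈ range m, (if Even i then 1 else 3) = 2 * m - m % 2 := fun m => by
    induction m with
    | zero => rfl
    | succ m ih =>
      rw [sum_range_succ, ih]
      split_ifs with h <;> simp only [Nat.even_iff] at h <;> omega
  rw [← hsum, ← Fin.sum_univ_eq_sum_range (fun i => if Even i then 1 else 3), alternatingSet,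
    card_filter, Fintype.sum_prod_type]
  simp only [← hcopy, card_filter]

theorem isDominating_alternatingSet :
    IsDominating (flowerSnark n) (alternatingSet n : Set (FV n)) := by
  rintro ⟨i, k⟩ hv
  simp only [mem_coe, mem_alternatingSet] at hv ⊢
  rcases eq_or_ne k 0 with rfl | hk
  · exact ⟨(i, 1), by simpa using hv, center_adj_leaf i one_ne_zero⟩
  · exact ⟨(i, 0), by simpa [hk] using hv, (center_adj_leaf i hk).symm⟩

theorem isIndepSet_alternatingSet (hn : 2 ≤ n) :
    (flowerSnark n).IsIndepSet (alternatingSet n : Set (FV n)) := by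
  have : NeZero n := ⟨by omega⟩
  have hcenter : ∀ i w, (i, 0) ∈ alternatingSet n → w ∈ alternatingSet n →
      ¬ (flowerSnark n).Adj (i, 0) w := by
    rintro i ⟨j, l⟩ hi hw hadj
    obtain ⟨rfl, hl⟩ := adj_center_iff.1 hadj
    exact hl ((mem_alternatingSet.1 hw).1 ((mem_alternatingSet.1 hi).2 rfl))
  have hrot : ∀ i k, k ≠ 0 → (i, k) ∈ alternatingSet n → rotation n (i, k) ∉ alternatingSet n := by
    intro i k hk hv hw
    have hne : twist i k ≠ 0 := fun h => rotation_ne_center hk i (i + 1) (Prod.ext rfl h)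
    simp only [mem_alternatingSet, rotation_apply, hk, hne, iff_false, val_add_one,
      val_add_one_mod] at hv hw
    split_ifs at hw
    · exact hw Even.zero
    · exact hw (Nat.even_add_one.2 hv)
  rintro ⟨i, k⟩ hv ⟨j, l⟩ hw - hadj
  rcases eq_or_ne k 0 with rfl | hk
  · exact hcenter i _ hv hw hadj
  rcases eq_or_ne l 0 with rfl | hl
  · exact hcenter j _ hw hv hadj.symm
  rcases (adj_leaf_iff hn hk).1 hadj with h | h | h
  · exact hl (congrArg Prod.snd h)
  · exact hrot i k hk hv (h ▸ hw)
  · rw [Equiv.eq_symm_apply] at h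
    exact hrot j l hl hw (h ▸ hv)

theorem upperDominationNumber_eq (hn : 3 ≤ n) : upperDominationNumber n = 2 * n - n % 2 := by
  refine IsGreatest.csSup_eq ⟨⟨alternatingSet n, ?_, ?_⟩, ?_⟩
  · exact minimalDominating_iff.2 <|
      isDominating_alternatingSet.minimal_of_isIndepSet (isIndepSet_alternatingSet (by omega))
  · rw [Set.ncard_coe_finset, card_alternatingSet]
  · rintro _ ⟨S, hS, rfl⟩
    lift S to Finset (FV n) using S.toFinite
    rw [Set.ncard_coe_finset]
    exact card_le_of_minimal hn (minimalDominating_iff.1 hS)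

end flowerSnark

end FlowerSnark

/-- For every `n ≥ 3`, the upper domination number of the flower snark `J_n`
equals `2n` if `n` is even, and `2n - 1` if `n` is odd. -/
theorem flowerSnark_upperDomination (n : ℕ) (hn : 3 ≤ n) :
    (Even n → upperDominationNumber n = 2 * n) ∧
    (Odd n → upperDominationNumber n = 2 * n - 1) := by
  rw [flowerSnark.upperDominationNumber_eq hn]
  exact ⟨fun h => by rw [Nat.even_iff.1 h, Nat.sub_zero], fun h => by rw [Nat.odd_iff.1 h]⟩
end

section
/- For every integer n ≥ 3, the 2-domination number of the flower snark J_n equals ⌈5n/3⌉ if n is not congruent to 1 mod 3, and equals (5n+4)/3 if n is congruent to 1 mod 3. -/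
/-!
Call a copy heavy if it contains at least three vertices of the 2-dominating set `S` and light if
it contains at most one. Every copy contains a vertex of `S`, a light copy meets `S` in its center
`a` only and lies next to a heavy copy, and any three consecutive copies contain at least five
vertices of `S`. Averaging over the `n` windows of three consecutive copies gives `5n ≤ 3|S|`. When
`n = 3k + 1` and `|S| ≤ 5k + 2`, splitting the other `3k` copies into windows shows that every copy
contains at most two vertices of `S`; so none is heavy, hence none is light, and `|S| ≥ 2n`, which
is impossible.

For every residue of `n` modulo 3 this gives `|S| ≥ n + 2⌈n/3⌉`, which is attained by taking the
leaves `b, c, d` of every third copy and the centers of all others.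
-/

section Periodic

open Finset

lemma sum_range_add_of_periodic {M : Type*} [AddCommMonoid M] {u : ℕ → M} {n : ℕ}
    (hu : Function.Periodic u n) (i : ℕ) :
    ∑ m ∈ range n, u (i + m) = ∑ m ∈ range n, u m := by
  induction i with
  | zero => simp only [zero_add]
  | succ i ih =>
    rw [← ih]
    cases n with
    | zero => rfl
    | succ n =>
      rw [sum_range_succ, sum_range_succ' (fun m ↦ u (i + m)), add_zero, ← hu i]
      simp only [add_right_comm, ← add_assoc]

lemma mul_le_sum_range_mul {u : ℕ → ℕ} {c p : ℕ} (hc : ∀ m, c ≤ ∑ j ∈ range p, u (m + j))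
    (i k : ℕ) : k * c ≤ ∑ m ∈ range (k * p), u (i + m) := by
  induction k with
  | zero => simp
  | succ k ih =>
    rw [add_mul, one_mul, add_mul, one_mul, sum_range_add]
    simpa only [add_assoc] using add_le_add ih (hc (i + k * p))

lemma mul_le_mul_sum_range_of_periodic {u : ℕ → ℕ} {n c p : ℕ} (hu : Function.Periodic u n)
    (hc : ∀ m, c ≤ ∑ j ∈ range p, u (m + j)) :
    n * c ≤ p * ∑ m ∈ range n, u m := by
  calc n * c ≤ ∑ m ∈ range n, ∑ j ∈ range p, u (m + j) := by
        simpa using card_nsmul_le_sum (range n) _ c fun m _ ↦ hc m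
    _ = ∑ j ∈ range p, ∑ m ∈ range n, u (j + m) := by
        rw [sum_comm]
        simp only [add_comm]
    _ = p * ∑ m ∈ range n, u m := by
        simp only [sum_range_add_of_periodic hu, sum_const, card_range, smul_eq_mul]

lemma add_mul_le_sum_range_of_periodic {u : ℕ → ℕ} {c k p : ℕ}
    (hu : Function.Periodic u (k * p + 1)) (hc : ∀ m, c ≤ ∑ j ∈ range p, u (m + j)) (i : ℕ) :
    u i + k * c ≤ ∑ m ∈ range (k * p + 1), u m := by
  rw [← sum_range_add_of_periodic hu i, sum_range_succ', add_zero, add_comm]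
  simpa only [add_right_comm i 1, ← add_assoc, add_le_add_iff_right]
    using mul_le_sum_range_mul hc (i + 1) k

lemma add_two_mul_le_sum_range_of_periodic {u : ℕ → ℕ} {n : ℕ} (hn : n ≠ 1)
    (hu : Function.Periodic u n) (hwindow : ∀ m, 5 ≤ ∑ j ∈ range 3, u (m + j))
    (hlight : ∀ m, u (m + 1) ≤ 1 → 3 ≤ u m ∨ 3 ≤ u (m + 2)) :
    n + 2 * ((n + 2) / 3) ≤ ∑ m ∈ range n, u m := by
  have haverage := mul_le_mul_sum_range_of_periodic hu hwindow
  by_contra! hlt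
  obtain ⟨k, rfl⟩ : ∃ k, n = k * 3 + 1 := ⟨n / 3, by omega⟩
  have hle (m : ℕ) : u m ≤ 2 := by
    have := add_mul_le_sum_range_of_periodic hu hwindow m
    omega
  have hge (m : ℕ) : 2 ≤ u (1 + m) := by
    by_contra! h
    have := hlight m (by rw [add_comm]; omega)
    have := hle m
    have := hle (m + 2)
    omega
  have := card_nsmul_le_sum (range (k * 3 + 1)) _ 2 fun m _ ↦ hge m
  rw [sum_range_add_of_periodic hu, card_range, smul_eq_mul] at this
  omega

end Periodic

section Rotation

variable {n : ℕ} [NeZero n]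

/-- The cyclic shift of the copies of `J_n`, an automorphism of order `2n`: it sends copy `i` to
copy `i + 1` and swaps `c` and `d` when it passes from the last copy to the first. -/
def snarkRotation (n : ℕ) [NeZero n] : Equiv.Perm (FV n) :=
  (Equiv.addRight 1).prodShear fun i ↦ if i + 1 = 0 then Equiv.swap 2 3 else Equiv.refl (Fin 4)

lemma snarkRotation_fst (v : FV n) : (snarkRotation n v).1 = v.1 + 1 := rfl

lemma snarkRotation_symm_fst (v : FV n) : ((snarkRotation n).symm v).1 = v.1 - 1 := by
  rw [eq_sub_iff_add_eq, ← snarkRotation_fst, Equiv.apply_symm_apply]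

lemma snarkRotation_snd_eq_zero {v : FV n} : (snarkRotation n v).2 = 0 ↔ v.2 = 0 := by
  obtain ⟨i, j⟩ := v
  by_cases h : i + 1 = 0 <;> fin_cases j <;> simp [snarkRotation, h, Equiv.swap_apply_def]

lemma snarkRotation_symm_snd_eq_zero {v : FV n} :
    ((snarkRotation n).symm v).2 = 0 ↔ v.2 = 0 := by
  rw [← snarkRotation_snd_eq_zero, Equiv.apply_symm_apply]

lemma val_add_one_eq_mod (i : Fin n) : ((i + 1 : Fin n) : ℕ) = ((i : ℕ) + 1) % n := by
  rw [Fin.val_add, Fin.val_one', Nat.add_mod_mod]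

lemma val_add_one_eq_ite (i : Fin n) :
    ((i + 1 : Fin n) : ℕ) = if (i : ℕ) = n - 1 then 0 else (i : ℕ) + 1 := by
  have := i.isLt
  rw [val_add_one_eq_mod]
  split_ifs with h
  · rw [h, Nat.sub_add_cancel (by omega), Nat.mod_self]
  · exact Nat.mod_eq_of_lt (by omega)

-- The right-hand side is the part of the relation defining `flowerSnark` that avoids the centers.
lemma snd_ne_zero_and_snarkRotation_eq_iff {v w : FV n} :
    v.2 ≠ 0 ∧ snarkRotation n v = w ↔
      (((v.1 : ℕ) + 1) % n = (w.1 : ℕ) ∧ v.2 = 1 ∧ w.2 = 1) ∨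
      ((v.1 : ℕ) + 1 = (w.1 : ℕ) ∧ v.2 = 2 ∧ w.2 = 2) ∨
      ((v.1 : ℕ) + 1 = (w.1 : ℕ) ∧ v.2 = 3 ∧ w.2 = 3) ∨
      ((v.1 : ℕ) = n - 1 ∧ (w.1 : ℕ) = 0 ∧ v.2 = 2 ∧ w.2 = 3) ∨
      ((v.1 : ℕ) = n - 1 ∧ (w.1 : ℕ) = 0 ∧ v.2 = 3 ∧ w.2 = 2) := by
  obtain ⟨i, j⟩ := v
  obtain ⟨i', j'⟩ := w
  have hi' := i'.isLt
  have hval := val_add_one_eq_ite i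
  simp only [snarkRotation, Equiv.prodShear_apply, Equiv.coe_addRight, Prod.mk.injEq,
    ← val_add_one_eq_mod, Fin.ext_iff (b := i'), Fin.ext_iff (b := (0 : Fin n)), Fin.val_zero, hval]
  by_cases h : (i : ℕ) = n - 1
  · have hne : n - 1 + 1 ≠ i' := by omega
    fin_cases j <;> fin_cases j' <;> simp [h, hne, eq_comm, Equiv.swap_apply_def]
  · fin_cases j <;> fin_cases j' <;> simp [h]

lemma flowerSnark_adj_iff {v w : FV n} :
    (flowerSnark n).Adj v w ↔ v ≠ w ∧ (v.1 = w.1 ∧ (v.2 = 0 ∨ w.2 = 0) ∨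
      v.2 ≠ 0 ∧ (snarkRotation n v = w ∨ snarkRotation n w = v)) := by
  rw [flowerSnark, SimpleGraph.fromRel_adj, ← snd_ne_zero_and_snarkRotation_eq_iff,
    ← snd_ne_zero_and_snarkRotation_eq_iff]
  have hsnd : snarkRotation n w = v → (v.2 = 0 ↔ w.2 = 0) := by
    rintro rfl
    exact snarkRotation_snd_eq_zero
  have hext : v.1 = w.1 → v.2 = 0 → w.2 = 0 → v = w := fun h h₁ h₂ ↦
    Prod.ext h (h₁.trans h₂.symm)
  rw [eq_comm (a := w.1)]
  tauto

end Rotation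

section CopyWeight

open Finset

variable {n : ℕ}

lemma ncard_eq_sum_indicator {α : Type*} [Fintype α] (S : Set α) :
    S.ncard = ∑ v, S.indicator (1 : α → ℕ) v := by
  classical
  simp [Set.indicator_apply, Set.ncard_eq_toFinset_card']

lemma copyWeight_eq_sum_indicator (S : Set (FV n)) (i : Fin n) :
    copyWeight S i = ∑ j, S.indicator (1 : FV n → ℕ) (i, j) := by
  classical
  rw [copyWeight, ncard_eq_sum_indicator, Fintype.sum_prod_type, sum_eq_single i]
  · simp only [Set.indicator_apply, Set.mem_inter_iff, Set.mem_ofPred_eq,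
      Nat.mod_eq_of_lt i.isLt, and_true]
  · intro i' _ hne
    simp [Nat.mod_eq_of_lt i.isLt, Fin.val_ne_of_ne hne]
  · simp

lemma ncard_eq_sum_copyWeight (S : Set (FV n)) :
    S.ncard = ∑ m ∈ range n, copyWeight S m := by
  rw [ncard_eq_sum_indicator, Fintype.sum_prod_type, sum_range]
  simp only [copyWeight_eq_sum_indicator]

lemma periodic_copyWeight (S : Set (FV n)) : Function.Periodic (copyWeight S) n := by
  intro m
  simp only [copyWeight, Nat.add_mod_right]

/-- The number of vertices of `S` among `b, c, d` of copy `i`. -/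
noncomputable def leafWeight (S : Set (FV n)) (i : Fin n) : ℕ :=
  ∑ j : Fin 3, S.indicator 1 (i, j.succ)

lemma copyWeight_eq_add_leafWeight (S : Set (FV n)) (i : Fin n) :
    copyWeight S i = S.indicator 1 (i, 0) + leafWeight S i := by
  rw [copyWeight_eq_sum_indicator, Fin.sum_univ_succ, leafWeight]

variable [NeZero n]

lemma sum_indicator_snarkRotation (S : Set (FV n)) (i : Fin n) :
    ∑ j : Fin 3, S.indicator 1 (snarkRotation n (i, j.succ)) = leafWeight S (i + 1) := by
  by_cases h : i + 1 = 0 <;>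
    simp [snarkRotation, leafWeight, h, Fin.sum_univ_three, add_right_comm, Equiv.swap_apply_def]

lemma sum_indicator_snarkRotation_symm (S : Set (FV n)) (i : Fin n) :
    ∑ j : Fin 3, S.indicator 1 ((snarkRotation n).symm (i, j.succ)) = leafWeight S (i - 1) := by
  by_cases h : i = 0 <;>
    simp [snarkRotation, leafWeight, h, Fin.sum_univ_three, add_right_comm, Equiv.swap_apply_def,
      sub_eq_add_neg]

end CopyWeight

namespace TwoDominating

open Finset

variable {n : ℕ} {S : Set (FV n)}

lemma two_le_of_forall_adj (hS : TwoDominating n S) {v x y z : FV n}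
    (hv : ∀ w, (flowerSnark n).Adj v w → w = x ∨ w = y ∨ w = z) :
    2 ≤ 2 * S.indicator 1 v + S.indicator 1 x + S.indicator 1 y + S.indicator 1 z := by
  by_cases hvS : v ∈ S
  · rw [Set.indicator_of_mem hvS, Pi.one_apply]
    omega
  obtain ⟨w₁, h₁, w₂, h₂, hne, ha₁, ha₂⟩ := hS v hvS
  rcases hv w₁ ha₁ with rfl | rfl | rfl <;> rcases hv w₂ ha₂ with rfl | rfl | rfl <;>
    first
    | exact absurd rfl hne
    | (simp only [Set.indicator_of_mem h₁, Set.indicator_of_mem h₂, Pi.one_apply]; omega)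

variable [NeZero n]

lemma two_le_two_mul_add_leafWeight (hS : TwoDominating n S) (i : Fin n) :
    2 ≤ 2 * S.indicator 1 (i, 0) + leafWeight S i := by
  rw [leafWeight, Fin.sum_univ_three, ← add_assoc, ← add_assoc]
  refine hS.two_le_of_forall_adj fun ⟨i', j⟩ hw ↦ ?_
  simp only [flowerSnark_adj_iff, ne_eq, Prod.mk.injEq] at hw
  fin_cases j <;> simp_all

lemma two_le_of_snd_ne_zero (hS : TwoDominating n S) {v : FV n} (hv : v.2 ≠ 0) :
    2 ≤ 2 * S.indicator 1 v + S.indicator 1 (v.1, 0) + S.indicator 1 ((snarkRotation n).symm v) +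
      S.indicator 1 (snarkRotation n v) := by
  refine hS.two_le_of_forall_adj fun w hw ↦ ?_
  obtain ⟨-, ⟨hi, hj⟩ | ⟨-, h | h⟩⟩ := flowerSnark_adj_iff.mp hw
  · exact .inl (Prod.ext hi.symm (hj.resolve_left hv))
  · exact .inr (.inr h.symm)
  · exact .inr (.inl ((snarkRotation n).eq_symm_apply.mpr h))

-- Sum the conditions at `b, c, d`: the rotation permutes the leaves of neighbouring copies, so the
-- outer neighbours add up to whole leaf weights.
lemma six_le_add_leafWeight (hS : TwoDominating n S) (i : Fin n) :
    6 ≤ 3 * S.indicator 1 (i, 0) + 2 * leafWeight S i + leafWeight S (i - 1) +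
      leafWeight S (i + 1) := by
  have hleaf := sum_le_sum (s := univ) fun (j : Fin 3) _ ↦
    hS.two_le_of_snd_ne_zero (v := (i, j.succ)) (Fin.succ_ne_zero j)
  simp only [sum_add_distrib, ← mul_sum, sum_indicator_snarkRotation,
    sum_indicator_snarkRotation_symm, sum_const, card_univ, Fintype.card_fin, smul_eq_mul] at hleaf
  rw [leafWeight]
  omega

lemma leafWeight_eq_three_of_notMem (hS : TwoDominating n S) {i : Fin n} (hi : (i, 0) ∉ S)
    (h : leafWeight S (i - 1) = 0 ∨ leafWeight S (i + 1) = 0) : leafWeight S i = 3 := by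
  have hmem (j : Fin 3) : S.indicator 1 (i, j.succ) = 1 := by
    have hleaf := hS.two_le_of_snd_ne_zero (v := (i, j.succ)) (Fin.succ_ne_zero j)
    rw [Set.indicator_of_notMem hi] at hleaf
    have hle (v : FV n) : S.indicator 1 v ≤ 1 := Set.indicator_le_self S 1 v
    have := hle (i, j.succ)
    have := hle ((snarkRotation n).symm (i, j.succ))
    have := hle (snarkRotation n (i, j.succ))
    rw [← sum_indicator_snarkRotation, ← sum_indicator_snarkRotation_symm, sum_eq_zero_iff,
      sum_eq_zero_iff] at h
    rcases h with h | h <;> have := h j (mem_univ j) <;> omega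
  simp only [leafWeight, hmem, sum_const, card_univ, Fintype.card_fin, smul_eq_mul]

lemma leafWeight_le_one_of_copyWeight_le_two (hS : TwoDominating n S) {i : Fin n}
    (hi : copyWeight S i ≤ 2)
    (h : leafWeight S (i - 1) = 0 ∨ leafWeight S (i + 1) = 0) : leafWeight S i ≤ 1 := by
  rw [copyWeight_eq_add_leafWeight] at hi
  by_cases hmem : (i, 0) ∈ S
  · rw [Set.indicator_of_mem hmem, Pi.one_apply] at hi
    omega
  · have := hS.leafWeight_eq_three_of_notMem hmem h
    omega

lemma one_le_copyWeight (hS : TwoDominating n S) (i : Fin n) : 1 ≤ copyWeight S i := by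
  have := hS.two_le_two_mul_add_leafWeight i
  rw [copyWeight_eq_add_leafWeight]
  omega

lemma leafWeight_eq_zero_of_copyWeight_le_one (hS : TwoDominating n S) {i : Fin n}
    (hi : copyWeight S i ≤ 1) : leafWeight S i = 0 := by
  have := hS.two_le_two_mul_add_leafWeight i
  rw [copyWeight_eq_add_leafWeight] at hi
  omega

lemma three_le_copyWeight_of_le_one (hS : TwoDominating n S) {i : Fin n}
    (hi : copyWeight S i ≤ 1) :
    3 ≤ copyWeight S (i - 1 : Fin n) ∨ 3 ≤ copyWeight S (i + 1 : Fin n) := by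
  by_contra! hlt
  have hzero := hS.leafWeight_eq_zero_of_copyWeight_le_one hi
  have hprev : leafWeight S (i - 1) ≤ 1 :=
    hS.leafWeight_le_one_of_copyWeight_le_two (by omega) (.inr (by rwa [sub_add_cancel]))
  have hnext : leafWeight S (i + 1) ≤ 1 :=
    hS.leafWeight_le_one_of_copyWeight_le_two (by omega) (.inl (by rwa [add_sub_cancel_right]))
  have hleaves := hS.six_le_add_leafWeight i
  have hcenter : S.indicator 1 (i, 0) ≤ 1 := Set.indicator_le_self S 1 (i, 0)
  omega

lemma five_le_copyWeight_add (hS : TwoDominating n S) (i : Fin n) :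
    5 ≤ copyWeight S (i - 1 : Fin n) + copyWeight S i + copyWeight S (i + 1 : Fin n) := by
  have hprev := hS.one_le_copyWeight (i - 1)
  have hnext := hS.one_le_copyWeight (i + 1)
  by_contra! hlt
  by_cases hi : copyWeight S i ≤ 1
  · have := hS.one_le_copyWeight i
    have := hS.three_le_copyWeight_of_le_one hi
    omega
  have hprev₀ : leafWeight S (i - 1) = 0 :=
    hS.leafWeight_eq_zero_of_copyWeight_le_one (by omega)
  have hnext₀ : leafWeight S (i + 1) = 0 :=
    hS.leafWeight_eq_zero_of_copyWeight_le_one (by omega)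
  have hleaves := hS.six_le_add_leafWeight i
  have hcenter : S.indicator 1 (i, 0) ≤ 1 := Set.indicator_le_self S 1 (i, 0)
  have hweight := copyWeight_eq_add_leafWeight S i
  omega

lemma add_two_mul_le_ncard (hS : TwoDominating n S) (hn : n ≠ 1) :
    n + 2 * ((n + 2) / 3) ≤ S.ncard := by
  have hcopy (m : ℕ) : copyWeight S (Fin.ofNat n m) = copyWeight S m :=
    (periodic_copyWeight S).map_mod_nat m
  have hsucc (m : ℕ) : Fin.ofNat n (m + 1) = Fin.ofNat n m + 1 := by
    simp [Fin.ext_iff, Fin.val_add]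
  have hpred (m : ℕ) : Fin.ofNat n (m + 1) - 1 = Fin.ofNat n m := by
    rw [hsucc, add_sub_cancel_right]
  rw [ncard_eq_sum_copyWeight]
  refine add_two_mul_le_sum_range_of_periodic hn (periodic_copyWeight S) (fun m ↦ ?_) fun m ↦ ?_
  · rw [sum_range_succ, sum_range_succ, sum_range_one]
    have := hS.five_le_copyWeight_add (Fin.ofNat n (m + 1))
    rwa [hpred, ← hsucc, hcopy, hcopy, hcopy] at this
  · have := hS.three_le_copyWeight_of_le_one (i := Fin.ofNat n (m + 1))
    rwa [hpred, ← hsucc, hcopy, hcopy, hcopy] at this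

end TwoDominating

section HeavyCopies

open Finset

variable {n : ℕ}

/-- The leaves `b, c, d` of the copies in `H` together with the centers `a` of all other copies. -/
def setOfHeavyCopies (H : Set (Fin n)) : Set (FV n) := {v | v.2 = 0 ↔ v.1 ∉ H}

lemma twoDominating_setOfHeavyCopies [NeZero n] {H : Set (Fin n)}
    (hH : ∀ i ∉ H, i - 1 ∈ H ∨ i + 1 ∈ H) : TwoDominating n (setOfHeavyCopies H) := by
  rintro ⟨i, j⟩ hv
  by_cases hi : i ∈ H
  · obtain rfl : j = 0 := by simpa [setOfHeavyCopies, hi] using hv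
    refine ⟨(i, 1), by simp [setOfHeavyCopies, hi], (i, 2), by simp [setOfHeavyCopies, hi],
      by simp, ?_, ?_⟩ <;>
      simp [flowerSnark_adj_iff]
  have hj : j ≠ 0 := by simpa [setOfHeavyCopies, hi] using hv
  obtain ⟨w, hw, hw₀, hrot⟩ : ∃ w : FV n, w.1 ∈ H ∧ w.2 ≠ 0 ∧
      (snarkRotation n (i, j) = w ∨ snarkRotation n w = (i, j)) := by
    rcases hH i hi with h | h
    · exact ⟨(snarkRotation n).symm (i, j), by rwa [snarkRotation_symm_fst],
        snarkRotation_symm_snd_eq_zero.not.mpr hj, .inr (Equiv.apply_symm_apply _ _)⟩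
    · exact ⟨snarkRotation n (i, j), h, snarkRotation_snd_eq_zero.not.mpr hj, .inl rfl⟩
  refine ⟨(i, 0), by simp [setOfHeavyCopies, hi], w, by simp [setOfHeavyCopies, hw, hw₀],
    ?_, ?_, ?_⟩
  · rintro rfl
    exact hw₀ rfl
  · simp [flowerSnark_adj_iff, hj]
  · refine flowerSnark_adj_iff.mpr ⟨?_, .inr ⟨hj, hrot⟩⟩
    rintro rfl
    exact hi hw

lemma copyWeight_setOfHeavyCopies (H : Set (Fin n)) [DecidablePred (· ∈ H)] (i : Fin n) :
    copyWeight (setOfHeavyCopies H) i = if i ∈ H then 3 else 1 := by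
  rw [copyWeight_eq_sum_indicator]
  by_cases hi : i ∈ H <;> simp [setOfHeavyCopies, hi, Fin.sum_univ_four, Set.indicator_apply]

lemma twoDominating_setOfHeavyCopies_three_dvd [NeZero n] :
    TwoDominating n (setOfHeavyCopies {i : Fin n | 3 ∣ (i : ℕ)}) := by
  refine twoDominating_setOfHeavyCopies fun i hi ↦ ?_
  rw [Set.mem_ofPred_eq] at hi
  obtain hmod | hmod : (i : ℕ) % 3 = 1 ∨ (i : ℕ) % 3 = 2 := by omega
  · left
    have hi₀ : i ≠ 0 := by
      rintro rfl
      simp at hmod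
    rw [Set.mem_ofPred_eq, Fin.val_sub_one_of_ne_zero hi₀]
    omega
  · right
    rw [Set.mem_ofPred_eq, val_add_one_eq_ite]
    split_ifs <;> omega

lemma sum_range_ite_three_dvd (n : ℕ) :
    ∑ m ∈ range n, (if 3 ∣ m then 3 else 1) = n + 2 * ((n + 2) / 3) := by
  induction n with
  | zero => rfl
  | succ n ih => rw [sum_range_succ, ih]; split_ifs <;> omega

lemma ncard_setOfHeavyCopies_three_dvd (n : ℕ) :
    (setOfHeavyCopies {i : Fin n | 3 ∣ (i : ℕ)}).ncard = n + 2 * ((n + 2) / 3) := by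
  rw [ncard_eq_sum_copyWeight, ← sum_range_ite_three_dvd, sum_range, sum_range]
  simp [copyWeight_setOfHeavyCopies]

end HeavyCopies

theorem twoDominationNumber_eq {n : ℕ} (hn : 1 < n) :
    twoDominationNumber n = n + 2 * ((n + 2) / 3) := by
  have : NeZero n := ⟨by omega⟩
  have hmem : ∃ S : Set (FV n), TwoDominating n S ∧ S.ncard = n + 2 * ((n + 2) / 3) :=
    ⟨_, twoDominating_setOfHeavyCopies_three_dvd, ncard_setOfHeavyCopies_three_dvd n⟩
  refine le_antisymm (Nat.sInf_le hmem) (le_csInf ⟨_, hmem⟩ ?_)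
  rintro _ ⟨S, hS, rfl⟩
  exact hS.add_two_mul_le_ncard hn.ne'

/-- For every `n ≥ 3`, the 2-domination number of the flower snark `J_n` equals
`⌈5n/3⌉` if `n ≢ 1 (mod 3)`, and `(5n+4)/3` if `n ≡ 1 (mod 3)`. -/
theorem flowerSnark_twoDomination (n : ℕ) (hn : 3 ≤ n) :
    (n % 3 ≠ 1 → (twoDominationNumber n : ℤ) = ⌈(5 * (n : ℚ)) / 3⌉) ∧
    (n % 3 = 1 → (twoDominationNumber n : ℚ) = (5 * n + 4) / 3) := by
  rw [twoDominationNumber_eq (by omega)]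
  constructor
  · intro h
    have hceil := Rat.ceil_natCast_div_natCast (5 * n) 3
    push_cast at hceil ⊢
    rw [hceil]
    omega
  · intro h
    obtain ⟨k, rfl⟩ : ∃ k, n = 3 * k + 1 := ⟨n / 3, by omega⟩
    rw [show (3 * k + 1 + 2) / 3 = k + 1 by omega]
    push_cast
    ring
end

section
/- For every integer n ≥ 3, the connected domination number of the flower snark J_n equals 2n if n is even, and equals 2n − 1 if n is odd. -/
/-!
Count the edge ends at a connected dominating set `S` of a `d`-regular graph. At least
`2 (|S| - 1)` of them belong to edges inside `S`, and every vertex outside `S` is the other end of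
one of the rest, so `|V| + |S| ≤ d |S| + 2`; for the cubic graph `J_n` on `4n` vertices this is
`2n - 1 ≤ |S|`. In the case of equality every outside vertex has exactly one neighbour in `S`, so
the complement of `S` induces a `(d - 1)`-regular graph. For even `n` the graph `J_n` is bipartite,
and regular bipartite graphs of positive degree have even order, whereas the complement would have
the odd order `2n + 1`; hence `2n ≤ |S|`.

All `a` and `b` vertices together attain `2n`. For odd `n`, a caterpillar with its spine in the `c`
path attains `2n - 1`: the twist between the last and the first copy saves one vertex.
-/

lemma induce_connected_of_descent {V : Type*} {G : SimpleGraph V} {S : Set V} {r : V} (hr : r ∈ S)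
    (f : V → ℕ) (hf : ∀ v ∈ S, v ≠ r → ∃ w ∈ S, G.Adj v w ∧ f w < f v) :
    (G.induce S).Connected := by
  have reachable_root (v : S) : (G.induce S).Reachable v ⟨r, hr⟩ := by
    induction hk : f v using Nat.strong_induction_on generalizing v with
    | _ k ih =>
      by_cases hvr : (v : V) = r
      · exact (Subtype.ext hvr : v = ⟨r, hr⟩) ▸ .rfl
      · obtain ⟨w, hw, hvw, hlt⟩ := hf v v.2 hvr
        have hadj : (G.induce S).Adj v ⟨w, hw⟩ := hvw
        exact hadj.reachable.trans (ih _ (hk ▸ hlt) ⟨w, hw⟩ rfl)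
  have : Nonempty S := ⟨⟨r, hr⟩⟩
  exact ⟨fun v w => (reachable_root v).trans (reachable_root w).symm⟩

section RegularGraph

open Finset

variable {V : Type*} [Fintype V] [DecidableEq V] {G : SimpleGraph V} [DecidableRel G.Adj]
  {S : Finset V} {d : ℕ}

lemma degree_induce_eq_card_inter (v : (S : Set V)) :
    (G.induce (S : Set V)).degree v = #(G.neighborFinset v ∩ S) := by
  rw [← SimpleGraph.card_neighborFinset_eq_degree, ← card_map (.subtype (· ∈ (S : Set V)))]
  congr 1
  ext w
  simp [and_comm]

lemma sum_card_neighborFinset_inter_comm (S T : Finset V) :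
    ∑ v ∈ S, #(G.neighborFinset v ∩ T) = ∑ v ∈ T, #(G.neighborFinset v ∩ S) := by
  have inter_eq_filter (U : Finset V) (v : V) :
      G.neighborFinset v ∩ U = {w ∈ U | G.Adj v w} := by
    ext w
    simp [and_comm]
  simpa only [inter_eq_filter, bipartiteAbove, bipartiteBelow, G.adj_comm] using
    sum_card_bipartiteAbove_eq_sum_card_bipartiteBelow (s := S) (t := T) G.Adj

lemma two_mul_card_le_sum_card_inter_of_connected (hconn : (G.induce (S : Set V)).Connected) :
    2 * #S ≤ ∑ v ∈ S, #(G.neighborFinset v ∩ S) + 2 := by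
  have card_le := hconn.card_vert_le_card_edgeSet_add_one
  rw [Nat.card_eq_fintype_card (α := (G.induce (S : Set V)).edgeSet), ← SimpleGraph.edgeFinset_card,
    show Nat.card (S : Set V) = #S by simp] at card_le
  have sum_degrees := (G.induce (S : Set V)).sum_degrees_eq_twice_card_edges
  simp only [degree_induce_eq_card_inter] at sum_degrees
  have sum_coe : ∑ v : (S : Set V), #(G.neighborFinset v ∩ S) =
      ∑ v ∈ S, #(G.neighborFinset v ∩ S) :=
    sum_coe_sort S fun v => #(G.neighborFinset v ∩ S)
  omega

lemma sum_compl_card_inter_add_le_of_connected (hdeg : ∀ v ∈ S, G.degree v ≤ d)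
    (hconn : (G.induce (S : Set V)).Connected) :
    ∑ v ∈ Sᶜ, #(G.neighborFinset v ∩ S) + 2 * #S ≤ d * #S + 2 := by
  have inside := two_mul_card_le_sum_card_inter_of_connected hconn
  have split_degree (v : V) :
      #(G.neighborFinset v ∩ Sᶜ) + #(G.neighborFinset v ∩ S) = G.degree v := by
    rw [← sdiff_eq_inter_compl, card_sdiff_add_card_inter, G.card_neighborFinset_eq_degree]
  have total : ∑ v ∈ S, #(G.neighborFinset v ∩ Sᶜ) + ∑ v ∈ S, #(G.neighborFinset v ∩ S)
      ≤ d * #S := by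
    rw [← sum_add_distrib, mul_comm]
    exact sum_le_card_nsmul S _ d fun v hv => (split_degree v).trans_le (hdeg v hv)
  rw [sum_card_neighborFinset_inter_comm]
  omega

lemma one_le_card_inter_of_dominating (hdom : ∀ v ∉ S, ∃ w ∈ S, G.Adj v w) :
    ∀ v ∈ Sᶜ, 1 ≤ #(G.neighborFinset v ∩ S) := by
  intro v hv
  obtain ⟨w, hw, hvw⟩ := hdom v (mem_compl.1 hv)
  exact card_pos.2 ⟨w, by simp [hvw, hw]⟩

omit [DecidableEq V] in
lemma card_add_card_le_of_connected_dominating (hdeg : ∀ v ∈ S, G.degree v ≤ d)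
    (hdom : ∀ v ∉ S, ∃ w ∈ S, G.Adj v w) (hconn : (G.induce (S : Set V)).Connected) :
    Fintype.card V + #S ≤ d * #S + 2 := by
  classical
  have boundary := sum_compl_card_inter_add_le_of_connected hdeg hconn
  have outside := sum_le_sum (one_le_card_inter_of_dominating hdom)
  rw [← card_eq_sum_ones] at outside
  have := card_add_card_compl S
  omega

lemma card_inter_eq_one_of_connected_dominating (hdeg : ∀ v ∈ S, G.degree v ≤ d)
    (hdom : ∀ v ∉ S, ∃ w ∈ S, G.Adj v w) (hconn : (G.induce (S : Set V)).Connected)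
    (hcard : Fintype.card V + #S = d * #S + 2) :
    ∀ v ∈ Sᶜ, #(G.neighborFinset v ∩ S) = 1 := by
  have boundary := sum_compl_card_inter_add_le_of_connected hdeg hconn
  have outside := one_le_card_inter_of_dominating hdom
  have sum_eq : ∑ v ∈ Sᶜ, 1 = ∑ v ∈ Sᶜ, #(G.neighborFinset v ∩ S) := by
    have sum_le := sum_le_sum outside
    rw [← card_eq_sum_ones] at sum_le ⊢
    have := card_add_card_compl S
    omega
  exact fun v hv => ((sum_eq_sum_iff_of_le outside).1 sum_eq v hv).symm

lemma isRegularOfDegree_induce_compl (hreg : G.IsRegularOfDegree d)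
    (hone : ∀ v ∈ Sᶜ, #(G.neighborFinset v ∩ S) = 1) :
    (G.induce ((Sᶜ : Finset V) : Set V)).IsRegularOfDegree (d - 1) := by
  intro v
  rw [degree_induce_eq_card_inter, ← sdiff_eq_inter_compl, card_sdiff, inter_comm, hone v v.2,
    G.card_neighborFinset_eq_degree, hreg v]

omit [DecidableEq V] in
lemma even_card_of_isRegularOfDegree_of_isBipartite (hreg : G.IsRegularOfDegree d) (hd : d ≠ 0)
    (hbip : G.IsBipartite) : Even (Fintype.card V) := by
  classical
  obtain ⟨C⟩ := hbip
  let A : Finset V := {v | C v = 0}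
  have hA : G.IsBipartiteWith A (Aᶜ : Finset V) := by
    refine ⟨by simpa using disjoint_compl_right, fun v w hvw => ?_⟩
    have := C.valid hvw
    simp only [A, coe_compl, Set.mem_compl_iff, mem_coe, mem_filter_univ]
    omega
  have sum_eq := SimpleGraph.isBipartiteWith_sum_degrees_eq hA
  simp only [hreg.degree_eq, sum_const, smul_eq_mul] at sum_eq
  rw [← card_add_card_compl A, Nat.eq_of_mul_eq_mul_right (Nat.pos_of_ne_zero hd) sum_eq]
  exact ⟨_, rfl⟩

lemma even_card_compl_of_connected_dominating (hreg : G.IsRegularOfDegree d) (hd : 2 ≤ d)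
    (hbip : G.IsBipartite) (hdom : ∀ v ∉ S, ∃ w ∈ S, G.Adj v w)
    (hconn : (G.induce (S : Set V)).Connected) (hcard : Fintype.card V + #S = d * #S + 2) :
    Even #Sᶜ := by
  have hone := card_inter_eq_one_of_connected_dominating (fun v _ => (hreg v).le) hdom hconn hcard
  have hreg' := isRegularOfDegree_induce_compl hreg hone
  have hbip' : (G.induce ((Sᶜ : Finset V) : Set V)).IsBipartite :=
    hbip.of_hom (SimpleGraph.Embedding.induce _).toHom
  simpa only [Fintype.card_coe, coe_sort_coe] using
    even_card_of_isRegularOfDegree_of_isBipartite hreg' (by omega) hbip'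

end RegularGraph

section Structure

variable {n : ℕ}

instance flowerSnark.decidableRelAdj : DecidableRel (flowerSnark n).Adj := by
  unfold flowerSnark
  infer_instance

/-- The rotation `x^i ↦ x^{i+1}` of the snark `J_n`, which exchanges the labels `c` and `d` on the
step from the last copy back to the first one. Off the vertices `a^i`, the edges of `J_n` join each
vertex to its image. -/
def flowerRotation (n : ℕ) : Equiv.Perm (FV n) :=
  (finRotate n).prodShear fun i => if (i : ℕ) + 1 = n then Equiv.swap 2 3 else 1

lemma flowerRotation_apply_of_lt {i : Fin n} (hi : (i : ℕ) + 1 < n) (s : Fin 4) :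
    flowerRotation n (i, s) = (⟨i + 1, hi⟩, s) := by
  have := Nat.mod_eq_of_lt hi
  ext <;> simp [flowerRotation, finRotate_apply, Fin.val_add, hi.ne, this]

lemma flowerRotation_apply_last {i : Fin n} (hi : (i : ℕ) + 1 = n) (s : Fin 4) :
    flowerRotation n (i, s) = (⟨0, i.pos⟩, Equiv.swap 2 3 s) := by
  ext <;> simp [flowerRotation, finRotate_apply, Fin.val_add, hi]

lemma val_flowerRotation_fst (v : FV n) :
    ((flowerRotation n v).1 : ℕ) = if (v.1 : ℕ) + 1 = n then 0 else (v.1 : ℕ) + 1 := by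
  split_ifs with h
  · rw [flowerRotation_apply_last h]
  · rw [flowerRotation_apply_of_lt (by omega)]

lemma flowerRotation_snd_eq_zero_iff (v : FV n) : (flowerRotation n v).2 = 0 ↔ v.2 = 0 := by
  have swap_eq_zero_iff : ∀ s : Fin 4, Equiv.swap 2 3 s = 0 ↔ s = 0 := by decide
  simp only [flowerRotation, Equiv.prodShear_apply]
  split_ifs
  · exact swap_eq_zero_iff v.2
  · rfl

lemma flowerRotation_apply_fst_ne (hn : 2 ≤ n) (v : FV n) : (flowerRotation n v).1 ≠ v.1 := by
  rw [Ne, Fin.ext_iff, val_flowerRotation_fst]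
  split_ifs <;> omega

lemma flowerRotation_flowerRotation_apply_fst_ne (hn : 3 ≤ n) (v : FV n) :
    (flowerRotation n (flowerRotation n v)).1 ≠ v.1 := by
  rw [Ne, Fin.ext_iff, val_flowerRotation_fst, val_flowerRotation_fst]
  split_ifs <;> omega

lemma flowerSnark_eq_fromRel :
    flowerSnark n = SimpleGraph.fromRel fun v w =>
      (v.1 = w.1 ∧ v.2 = 0 ∧ w.2 ≠ 0) ∨ (v.2 ≠ 0 ∧ w = flowerRotation n v) := by
  unfold flowerSnark
  congr 1
  ext v w
  have label_eq_iff : ∀ s t : Fin 4, s ≠ 0 ∧ t = s ↔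
      (s = 1 ∧ t = 1) ∨ (s = 2 ∧ t = 2) ∨ (s = 3 ∧ t = 3) := by decide
  have label_eq_swap_iff : ∀ s t : Fin 4, s ≠ 0 ∧ t = Equiv.swap 2 3 s ↔
      (s = 1 ∧ t = 1) ∨ (s = 2 ∧ t = 3) ∨ (s = 3 ∧ t = 2) := by decide
  obtain ⟨i, s⟩ := v
  obtain ⟨j, t⟩ := w
  refine or_congr_right ?_
  dsimp only
  by_cases h : (i : ℕ) + 1 = n
  · rw [flowerRotation_apply_last h, Prod.mk.injEq, and_left_comm (a := s ≠ 0),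
      label_eq_swap_iff, Fin.ext_iff (a := j)]
    have hmod : ((i : ℕ) + 1) % n = 0 := by rw [h, Nat.mod_self]
    grind
  · have hmod : ((i : ℕ) + 1) % n = i + 1 := Nat.mod_eq_of_lt (by omega)
    rw [flowerRotation_apply_of_lt (by omega), Prod.mk.injEq, and_left_comm (a := s ≠ 0),
      label_eq_iff, Fin.ext_iff (a := j)]
    grind

lemma flowerSnark_adj_hub_iff (i : Fin n) (w : FV n) :
    (flowerSnark n).Adj (i, 0) w ↔ w = (i, 1) ∨ w = (i, 2) ∨ w = (i, 3) := by
  have ne_zero_iff : ∀ t : Fin 4, t ≠ 0 ↔ t = 1 ∨ t = 2 ∨ t = 3 := by decide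
  have := ne_zero_iff w.2
  have := flowerRotation_snd_eq_zero_iff w
  rw [flowerSnark_eq_fromRel, SimpleGraph.fromRel_adj]
  grind

lemma flowerSnark_adj_spoke_iff (hn : 2 ≤ n) {v : FV n} (hv : v.2 ≠ 0) (w : FV n) :
    (flowerSnark n).Adj v w ↔
      w = (v.1, 0) ∨ w = flowerRotation n v ∨ w = (flowerRotation n).symm v := by
  have := flowerRotation_snd_eq_zero_iff w
  have := flowerRotation_apply_fst_ne hn v
  rw [flowerSnark_eq_fromRel, SimpleGraph.fromRel_adj, Equiv.eq_symm_apply]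
  grind

lemma flowerSnark_isRegularOfDegree_three (hn : 3 ≤ n) :
    (flowerSnark n).IsRegularOfDegree 3 := by
  rintro ⟨i, s⟩
  rw [← SimpleGraph.card_neighborFinset_eq_degree, Finset.card_eq_three]
  by_cases hs : s = 0
  · subst hs
    refine ⟨(i, 1), (i, 2), (i, 3), by simp, by simp, by simp, ?_⟩
    ext w
    simp [flowerSnark_adj_hub_iff]
  · have fst_ne := flowerRotation_apply_fst_ne (by omega : 2 ≤ n)
    have symm_fst_ne := fst_ne ((flowerRotation n).symm (i, s))
    rw [Equiv.apply_symm_apply] at symm_fst_ne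
    refine ⟨(i, 0), flowerRotation n (i, s), (flowerRotation n).symm (i, s), ?_, ?_, ?_, ?_⟩
    · exact fun h => fst_ne (i, s) (congrArg Prod.fst h).symm
    · exact fun h => symm_fst_ne (congrArg Prod.fst h :)
    · rw [Ne, Equiv.eq_symm_apply]
      exact fun h => flowerRotation_flowerRotation_apply_fst_ne hn (i, s) (congrArg Prod.fst h)
    · ext w
      simpa using flowerSnark_adj_spoke_iff (by omega) (v := (i, s)) hs w

lemma flowerSnark_isBipartite (hn : Even n) : (flowerSnark n).IsBipartite := by
  let color (v : FV n) : Bool := decide (Even (v.1 : ℕ) ↔ v.2 = 0)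
  have color_ne {v w : FV n} (h : (v.1 = w.1 ∧ v.2 = 0 ∧ w.2 ≠ 0) ∨
      (v.2 ≠ 0 ∧ w = flowerRotation n v)) : color v ≠ color w := by
    rcases h with ⟨hcopy, hv, hw⟩ | ⟨hv, rfl⟩
    · simp [color, hcopy, hv, hw]
    · have := val_flowerRotation_fst v
      have := flowerRotation_snd_eq_zero_iff v
      grind
  refine (SimpleGraph.Coloring.mk color fun {v w} hvw => ?_).colorable
  rw [flowerSnark_eq_fromRel, SimpleGraph.fromRel_adj] at hvw
  exact hvw.2.elim color_ne fun h => (color_ne h).symm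

lemma flowerSnark_adj_hub_spoke (i : Fin n) {s : Fin 4} (hs : s ≠ 0) :
    (flowerSnark n).Adj (i, 0) (i, s) := by
  simp [flowerSnark, hs, hs.symm]

lemma flowerSnark_adj_next {i : Fin n} (hi : (i : ℕ) + 1 < n) {s : Fin 4} (hs : s ≠ 0) :
    (flowerSnark n).Adj (i, s) (⟨i + 1, hi⟩, s) := by
  rw [flowerSnark_adj_spoke_iff (by omega) hs, flowerRotation_apply_of_lt hi]
  exact Or.inr (Or.inl rfl)

lemma flowerSnark_adj_prev {i : Fin n} (hi : (i : ℕ) ≠ 0) {s : Fin 4} (hs : s ≠ 0) :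
    (flowerSnark n).Adj (i, s) (⟨i - 1, by omega⟩, s) := by
  have hsucc : (i : ℕ) - 1 + 1 = i := by omega
  have hadj := flowerSnark_adj_next (i := ⟨i - 1, by omega⟩) (hsucc ▸ i.isLt) hs
  simpa only [hsucc] using hadj.symm

lemma flowerSnark_adj_wrap (hn : 2 ≤ n) {i : Fin n} (hi : (i : ℕ) + 1 = n) {s : Fin 4}
    (hs : s ≠ 0) : (flowerSnark n).Adj (i, s) (⟨0, i.pos⟩, Equiv.swap 2 3 s) := by
  rw [flowerSnark_adj_spoke_iff hn hs, flowerRotation_apply_last hi]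
  exact Or.inr (Or.inl rfl)

end Structure

section Constructions

variable {n : ℕ}

lemma ncard_univ_prod_zero_one : (Set.univ ×ˢ {0, 1} : Set (FV n)).ncard = 2 * n := by
  rw [Set.ncard_prod, Set.ncard_univ, Nat.card_fin, Set.ncard_pair (by decide), mul_comm]

lemma connectedDominating_univ_prod_zero_one (hn : n ≠ 0) :
    ConnectedDominating n (Set.univ ×ˢ {0, 1}) := by
  constructor
  · rintro ⟨i, s⟩ hs
    have hs : s ≠ 0 := fun h => hs (by simp [h])
    exact ⟨(i, 0), by simp, (flowerSnark_adj_hub_spoke i hs).symm⟩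
  · refine induce_connected_of_descent (r := (⟨0, Nat.pos_of_ne_zero hn⟩, 1)) (by simp)
      (fun v => 2 * (v.1 : ℕ) + if v.2 = 0 then 1 else 0) ?_
    rintro ⟨i, s⟩ hs hroot
    obtain rfl | rfl : s = 0 ∨ s = 1 := by simpa using hs
    · exact ⟨(i, 1), by simp, flowerSnark_adj_hub_spoke i one_ne_zero, by simp⟩
    · have hi : (i : ℕ) ≠ 0 := fun h => hroot (by ext <;> simp [h])
      exact ⟨_, by simp, flowerSnark_adj_prev hi one_ne_zero, by grind⟩

/-- For odd `n`, the vertex set of a caterpillar with `2n - 1` vertices. Its spine is the path of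
the first `n - 1` vertices `c`. From every other one of these, starting with `c^1` (copy index
`0`), hangs a leg of two vertices, `a` and then, alternately, `b` or `d`. The end vertex of the
next leg lies in the last copy and is joined to the first copy instead. -/
def flowerCaterpillar (n : ℕ) : Set (FV n) :=
  {v | v.2 = 2 ∧ (v.1 : ℕ) + 1 < n ∨ v.2 = 0 ∧ Even (v.1 : ℕ) ∧ (v.1 : ℕ) + 1 < n ∨
    v.2 = 1 ∧ (v.1 : ℕ) % 4 = 0 ∨ v.2 = 3 ∧ (v.1 : ℕ) % 4 = 2}

lemma c_mem_flowerCaterpillar {i : Fin n} (hi : (i : ℕ) + 1 < n) :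
    (i, 2) ∈ flowerCaterpillar n :=
  Or.inl ⟨rfl, hi⟩

lemma a_mem_flowerCaterpillar {i : Fin n} (heven : Even (i : ℕ)) (hi : (i : ℕ) + 1 < n) :
    (i, 0) ∈ flowerCaterpillar n :=
  Or.inr (Or.inl ⟨rfl, heven, hi⟩)

lemma b_mem_flowerCaterpillar {i : Fin n} (hi : (i : ℕ) % 4 = 0) :
    (i, 1) ∈ flowerCaterpillar n :=
  Or.inr (Or.inr (Or.inl ⟨rfl, hi⟩))

lemma d_mem_flowerCaterpillar {i : Fin n} (hi : (i : ℕ) % 4 = 2) :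
    (i, 3) ∈ flowerCaterpillar n :=
  Or.inr (Or.inr (Or.inr ⟨rfl, hi⟩))

lemma ncard_flowerCaterpillar_le (hodd : Odd n) : (flowerCaterpillar n).ncard ≤ 2 * n - 1 := by
  -- Copies `2k` and `2k + 1` of the caterpillar receive the codes `4k`, ..., `4k + 3`.
  let code (v : FV n) : ℕ := 2 * v.1 + if v.2 = 0 then 2 else if v.2 = 2 then 1 else 0
  have mapsTo : Set.MapsTo code (flowerCaterpillar n) (Finset.range (2 * n - 1)) := by
    rintro ⟨i, s⟩ hv
    simp only [flowerCaterpillar, Set.mem_ofPred_eq, Finset.coe_range, Set.mem_Iio, code] at hv ⊢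
    grind
  have injOn : Set.InjOn code (flowerCaterpillar n) := by
    rintro ⟨i, s⟩ hv ⟨j, t⟩ hw h
    simp only [flowerCaterpillar, Set.mem_ofPred_eq, code] at hv hw h
    simp only [Prod.mk.injEq, Fin.ext_iff]
    grind
  simpa using Set.ncard_le_ncard_of_injOn code mapsTo injOn

lemma connected_flowerCaterpillar (hodd : Odd n) (hn : 3 ≤ n) :
    ((flowerSnark n).induce (flowerCaterpillar n)).Connected := by
  refine induce_connected_of_descent (r := (⟨0, by omega⟩, 2)) (c_mem_flowerCaterpillar (by grind))
    (fun v => 3 * (v.1 : ℕ) + if v.2 = 2 then 0 else if v.2 = 0 then 1 else 2) ?_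
  rintro ⟨i, s⟩ hv hroot
  have leg_end_to_hub (heven : Even (i : ℕ)) (hi : (i : ℕ) + 1 ≠ n) (hs : s ≠ 0) :
      (i, 0) ∈ flowerCaterpillar n ∧ (flowerSnark n).Adj (i, s) (i, 0) :=
    ⟨a_mem_flowerCaterpillar heven (by omega), (flowerSnark_adj_hub_spoke i hs).symm⟩
  obtain ⟨hs, hi⟩ | ⟨hs, heven, hi⟩ | ⟨hs, hmod⟩ | ⟨hs, hmod⟩ := hv <;>
    obtain rfl : s = _ := hs
  · have hi0 : (i : ℕ) ≠ 0 := fun h => hroot (by ext <;> simp [h])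
    exact ⟨_, c_mem_flowerCaterpillar (by grind), flowerSnark_adj_prev hi0 (by decide), by grind⟩
  · exact ⟨_, c_mem_flowerCaterpillar hi, flowerSnark_adj_hub_spoke i (by decide), by simp⟩
  · by_cases hlast : (i : ℕ) + 1 = n
    · exact ⟨_, b_mem_flowerCaterpillar rfl,
        flowerSnark_adj_wrap (s := 1) (by omega) hlast (by decide), by grind⟩
    · obtain ⟨hmem, hadj⟩ := leg_end_to_hub (by grind) hlast (by decide)
      exact ⟨_, hmem, hadj, by simp⟩
  · by_cases hlast : (i : ℕ) + 1 = n
    · exact ⟨_, c_mem_flowerCaterpillar (by grind),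
        flowerSnark_adj_wrap (s := 3) (by omega) hlast (by decide), by grind⟩
    · obtain ⟨hmem, hadj⟩ := leg_end_to_hub (by grind) hlast (by decide)
      exact ⟨_, hmem, hadj, by simp⟩

lemma exists_adj_mem_flowerCaterpillar_of_odd (hodd : Odd n) {i : Fin n} (hi : Odd (i : ℕ))
    {s : Fin 4} (hs : (i, s) ∉ flowerCaterpillar n) :
    ∃ w ∈ flowerCaterpillar n, (flowerSnark n).Adj (i, s) w := by
  have hfirst : (i : ℕ) ≠ 0 := by grind
  have hlast : (i : ℕ) + 1 < n := by grind
  have hmod : (i : ℕ) % 4 = 1 ∨ (i : ℕ) % 4 = 3 := by grind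
  have hspine := c_mem_flowerCaterpillar hlast
  obtain rfl | rfl | rfl | rfl : s = 0 ∨ s = 1 ∨ s = 2 ∨ s = 3 := by fin_cases s <;> simp
  · exact ⟨_, hspine, flowerSnark_adj_hub_spoke i (by decide)⟩
  · rcases hmod with hmod | hmod
    · exact ⟨_, b_mem_flowerCaterpillar (by grind), flowerSnark_adj_prev hfirst (by decide)⟩
    · exact ⟨_, b_mem_flowerCaterpillar (by grind), flowerSnark_adj_next hlast (by decide)⟩
  · exact absurd hspine hs
  · rcases hmod with hmod | hmod
    · exact ⟨_, d_mem_flowerCaterpillar (by grind), flowerSnark_adj_next hlast (by decide)⟩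
    · exact ⟨_, d_mem_flowerCaterpillar (by grind), flowerSnark_adj_prev hfirst (by decide)⟩

lemma exists_adj_mem_flowerCaterpillar_of_last (hodd : Odd n) (hn : 3 ≤ n) {i : Fin n}
    (hi : (i : ℕ) + 1 = n) (s : Fin 4) :
    ∃ w ∈ flowerCaterpillar n, (flowerSnark n).Adj (i, s) w := by
  obtain rfl | rfl | rfl | rfl : s = 0 ∨ s = 1 ∨ s = 2 ∨ s = 3 := by fin_cases s <;> simp
  · obtain hmod | hmod : (i : ℕ) % 4 = 0 ∨ (i : ℕ) % 4 = 2 := by grind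
    · exact ⟨_, b_mem_flowerCaterpillar hmod, flowerSnark_adj_hub_spoke i (by decide)⟩
    · exact ⟨_, d_mem_flowerCaterpillar hmod, flowerSnark_adj_hub_spoke i (by decide)⟩
  · exact ⟨_, b_mem_flowerCaterpillar rfl,
      flowerSnark_adj_wrap (s := 1) (by omega) hi (by decide)⟩
  · exact ⟨_, c_mem_flowerCaterpillar (by grind), flowerSnark_adj_prev (by omega) (by decide)⟩
  · exact ⟨_, c_mem_flowerCaterpillar (by grind),
      flowerSnark_adj_wrap (s := 3) (by omega) hi (by decide)⟩

lemma dominating_flowerCaterpillar (hodd : Odd n) (hn : 3 ≤ n) :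
    Dominating n (flowerCaterpillar n) := by
  rintro ⟨i, s⟩ hs
  by_cases hi : Odd (i : ℕ)
  · exact exists_adj_mem_flowerCaterpillar_of_odd hodd hi hs
  by_cases hlast : (i : ℕ) + 1 = n
  · exact exists_adj_mem_flowerCaterpillar_of_last hodd hn hlast s
  · have hhub := a_mem_flowerCaterpillar (i := i) (Nat.not_odd_iff_even.1 hi) (by omega)
    have hs0 : s ≠ 0 := fun h => hs (h ▸ hhub)
    exact ⟨(i, 0), hhub, (flowerSnark_adj_hub_spoke i hs0).symm⟩

lemma connectedDominating_flowerCaterpillar (hodd : Odd n) (hn : 3 ≤ n) :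
    ConnectedDominating n (flowerCaterpillar n) :=
  ⟨dominating_flowerCaterpillar hodd hn, connected_flowerCaterpillar hodd hn⟩

end Constructions

section ConnectedDominationNumber

variable {n : ℕ}

lemma connectedDominationNumber_le {S : Set (FV n)} (hS : ConnectedDominating n S) :
    connectedDominationNumber n ≤ S.ncard :=
  Nat.sInf_le ⟨S, hS, rfl⟩

lemma exists_connectedDominating_card_eq (hn : n ≠ 0) :
    ∃ S : Finset (FV n), ConnectedDominating n S ∧ S.card = connectedDominationNumber n := by
  obtain ⟨S, hS, hcard⟩ : connectedDominationNumber n ∈ _ :=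
    Nat.sInf_mem ⟨_, _, connectedDominating_univ_prod_zero_one hn, rfl⟩
  lift S to Finset (FV n) using S.toFinite
  exact ⟨S, hS, by rwa [← Set.ncard_coe_finset]⟩

lemma ConnectedDominating.two_mul_le_card_add_one (hn : 3 ≤ n) {S : Finset (FV n)}
    (hS : ConnectedDominating n S) : 2 * n ≤ S.card + 1 := by
  have := card_add_card_le_of_connected_dominating
    (fun v _ => (flowerSnark_isRegularOfDegree_three hn v).le) hS.1 hS.2
  rw [Fintype.card_prod, Fintype.card_fin, Fintype.card_fin] at this
  omega

lemma ConnectedDominating.two_mul_le_card_of_even (hn : 3 ≤ n) (heven : Even n)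
    {S : Finset (FV n)} (hS : ConnectedDominating n S) : 2 * n ≤ S.card := by
  by_contra! hlt
  have hle := hS.two_mul_le_card_add_one hn
  have hcard : Fintype.card (FV n) = 4 * n := by simp [mul_comm]
  have heven_compl := even_card_compl_of_connected_dominating
    (flowerSnark_isRegularOfDegree_three hn) (by norm_num) (flowerSnark_isBipartite heven)
    hS.1 hS.2 (by omega)
  rw [Finset.card_compl] at heven_compl
  grind

end ConnectedDominationNumber

/-- For every `n ≥ 3`, the connected domination number of the flower snark
`J_n` equals `2n` if `n` is even, and `2n - 1` if `n` is odd. -/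
theorem flowerSnark_connectedDomination (n : ℕ) (hn : 3 ≤ n) :
    (Even n → connectedDominationNumber n = 2 * n) ∧
    (Odd n → connectedDominationNumber n = 2 * n - 1) := by
  obtain ⟨S, hS, hcard⟩ := exists_connectedDominating_card_eq (n := n) (by omega)
  refine ⟨fun heven => ?_, fun hodd => ?_⟩
  · have upper :=
      connectedDominationNumber_le (connectedDominating_univ_prod_zero_one (n := n) (by omega))
    rw [ncard_univ_prod_zero_one] at upper
    have lower := hS.two_mul_le_card_of_even hn heven
    omega
  · have upper := connectedDominationNumber_le (connectedDominating_flowerCaterpillar hodd hn)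
    have size := ncard_flowerCaterpillar_le hodd
    have lower := hS.two_mul_le_card_add_one hn
    omega
end
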